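/- arXiv:1303.5509 — 2 statements merged into one kernel-verified Lean document; each statement's English description precedes it below -/
import Mathlib

section
/- Let q be a prime power and let S_T be a tangent splash of ℓ∞ in PG(2,q³) with centre T. The number of order-q-subplanes of PG(2,q³) tangent to ℓ∞ whose tangent splash equals S_T is q⁶(q³−1). -/
/-!
Call a linear automorphism of `K³` a perspectivity if it fixes all vectors with third coordinate
`0`. It is determined by the image `u` of the third standard basis vector, so there are
`q⁶(q³ - 1)` of them, one for each `u` with `u 2 ≠ 0`. They fix every point of `ℓ∞`, hence permute
the subplanes tangent to `ℓ∞` with a given splash, and they do so regularly.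

A subplane tangent to `ℓ∞` at `[t]` consists of the points with coordinates in the `F`-span of a
basis `t, b₁, b₂` for which the third coordinates of `b₁` and `b₂` span a plane `L` of `K` over `F`;
its splash is `{[t]} ∪ {[w + s t] : s ∈ L}`, where `[w]` is the point of `ℓ∞` on the line `b₁b₂`. If
this set had a second centre, then the inverses of the nonzero elements of `L` would lie in a
plane of `K` over `F` as well. For `a, b ∈ L` independent, a linear relation between
`a⁻¹`, `b⁻¹` and `(a + b)⁻¹` is a quadratic equation for `b / a`, which is impossible as no element
of `K` has degree `2` over `F`. Hence the splash determines `[t]`. It then determines `(L, w)` up to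
a simultaneous scaling of `L` and `w` and a translation of `w` by `L t`, and these changes are
absorbed by passing to another basis of the same kind and applying a perspectivity.
-/

namespace TangentSplashPaper

open Projectivization

/-- The point set of the projective plane `PG(2,K)`. -/
abbrev PGPoint (K : Type*) [Field K] := Projectivization K (Fin 3 → K)

/-- `ℓ` is a line of `PG(2,K)`: the set of points lying in a fixed
2-dimensional linear subspace. -/
def IsLine {K : Type*} [Field K] (ℓ : Set (PGPoint K)) : Prop :=
  ∃ W : Submodule K (Fin 3 → K), Module.finrank K W = 2 ∧
    ℓ = {P : PGPoint K | P.submodule ≤ W}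

/-- The distinguished line `ℓ∞` of `PG(2,K)`: points whose last homogeneous
coordinate vanishes. -/
def linf (K : Type*) [Field K] : Set (PGPoint K) := {P : PGPoint K | P.rep 2 = 0}

/-- The homography of `PG(2,K)` induced by a linear automorphism of `K³`;
as maps of point sets, these are exactly the elements of `PGL(3,K)`. -/
def hmap {K : Type*} [Field K] (f : (Fin 3 → K) ≃ₗ[K] (Fin 3 → K)) :
    PGPoint K → PGPoint K :=
  Projectivization.map f.toLinearMap f.injective

/-- The base subplane `PG(2,F)`: points admitting homogeneous coordinates in
the subfield `F`. -/
def basePlane (F K : Type*) [Field F] [Field K] [Algebra F K] : Set (PGPoint K) :=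
  {P : PGPoint K | ∃ v : Fin 3 → K, ∃ hv : v ≠ 0, P = Projectivization.mk K v hv ∧
    ∀ i, v i ∈ (algebraMap F K).range}

/-- An order-`q`-subplane of `PG(2,K)` (`q = |F|`): an image of `PG(2,F)`
under a homography. -/
def IsSubplane (F : Type*) {K : Type*} [Field F] [Field K] [Algebra F K]
    (S : Set (PGPoint K)) : Prop :=
  ∃ f : (Fin 3 → K) ≃ₗ[K] (Fin 3 → K), S = hmap f '' basePlane F K

/-- An order-`q`-subline of `PG(2,K)`: the intersection of an order-`q`-subplane
with a line of `PG(2,K)` meeting it in `q+1` points. -/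
def IsSubline (F : Type*) {K : Type*} [Field F] [Field K] [Algebra F K] (q : ℕ)
    (b : Set (PGPoint K)) : Prop :=
  ∃ S ℓ : Set (PGPoint K), IsSubplane F S ∧ IsLine ℓ ∧
    (S ∩ ℓ).ncard = q + 1 ∧ b = S ∩ ℓ

/-- The splash of a subplane `π` on `ℓ∞`: all points of `ℓ∞` lying on a line
of `PG(2,K)` spanned by two points of `π`. -/
def splash {K : Type*} [Field K] (π : Set (PGPoint K)) : Set (PGPoint K) :=
  {X : PGPoint K | X ∈ linf K ∧ ∃ P Q : PGPoint K, P ∈ π ∧ Q ∈ π ∧ P ≠ Q ∧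
    ∃ ℓ : Set (PGPoint K), IsLine ℓ ∧ P ∈ ℓ ∧ Q ∈ ℓ ∧ X ∈ ℓ}

/-- `S` is a tangent splash of `ℓ∞` with centre `T`: `S` is the splash of some
order-`q`-subplane meeting `ℓ∞` exactly in the point `T`. -/
def IsTangentSplash (F : Type*) {K : Type*} [Field F] [Field K] [Algebra F K]
    (S : Set (PGPoint K)) (T : PGPoint K) : Prop :=
  ∃ π : Set (PGPoint K), IsSubplane F π ∧ π ∩ linf K = {T} ∧ S = splash π

/-- The set `t_P`: points of `ℓ∞` lying on the extension of a line of the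
subplane `π` through the point `P` (lines of `π` are the lines of `PG(2,K)`
meeting `π` in `q+1` points). -/
def pencilTrace {K : Type*} [Field K] (q : ℕ) (π : Set (PGPoint K))
    (P : PGPoint K) : Set (PGPoint K) :=
  {X : PGPoint K | X ∈ linf K ∧ ∃ ℓ : Set (PGPoint K), IsLine ℓ ∧ P ∈ ℓ ∧
    (π ∩ ℓ).ncard = q + 1 ∧ X ∈ ℓ}

section LinearSets

variable {F K V : Type*} [Field F] [Field K] [AddCommGroup V] [Module K V] [Module F V]

theorem ne_zero_of_submodule_eq_span {P : Projectivization K V} {v : V}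
    (hv : P.submodule = K ∙ v) : v ≠ 0 := by
  rintro rfl
  have h := P.finrank_submodule
  rw [hv, Submodule.span_zero_singleton, finrank_bot] at h
  exact zero_ne_one h

theorem submodule_map_eq_map_submodule {W : Type*} [AddCommGroup W] [Module K W]
    (f : V →ₗ[K] W) (hf : Function.Injective f) (P : Projectivization K V) :
    (Projectivization.map f hf P).submodule = P.submodule.map f := by
  induction P using Projectivization.ind with
  | h v hv => rw [map_mk, submodule_mk, submodule_mk, Submodule.map_span, Set.image_singleton]

theorem submodule_eq_span_of_mem {P : Projectivization K V} {v : V} (hv0 : v ≠ 0)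
    (hv : v ∈ P.submodule) : P.submodule = K ∙ v := by
  rw [P.submodule_eq] at hv ⊢
  obtain ⟨c, rfl⟩ := Submodule.mem_span_singleton.1 hv
  have hc : c ≠ 0 := fun h => hv0 (by rw [h, zero_smul])
  exact (Submodule.span_singleton_smul_eq hc.isUnit _).symm

theorem ne_iff_linearIndependent {P Q : Projectivization K V} {p q : V}
    (hp : P.submodule = K ∙ p) (hq : Q.submodule = K ∙ q) :
    P ≠ Q ↔ LinearIndependent K ![p, q] := by
  have hp0 := ne_zero_of_submodule_eq_span hp
  have hq0 := ne_zero_of_submodule_eq_span hq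
  obtain rfl : P = Projectivization.mk K p hp0 :=
    submodule_injective (hp.trans (submodule_mk p hp0).symm)
  obtain rfl : Q = Projectivization.mk K q hq0 :=
    submodule_injective (hq.trans (submodule_mk q hq0).symm)
  rw [← independent_pair_iff_ne, independent_mk_iff_LinearIndependent]

theorem finrank_submodule_sup_submodule {P Q : Projectivization K V} (hPQ : P ≠ Q) :
    Module.finrank K ↥(P.submodule ⊔ Q.submodule) = 2 := by
  have h := finrank_span_eq_card (linearIndependent_pair_iff_ne.2 hPQ)
  rwa [Matrix.range_cons_cons_empty, Submodule.span_insert, ← P.submodule_eq, ← Q.submodule_eq] at h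

variable (K) in
/-- The `F`-linear set of `PG(V)` defined by an `F`-subspace `U` of the `K`-vector space `V`: the
points having a vector of homogeneous coordinates in `U`. -/
def linearSet (U : Submodule F V) : Set (Projectivization K V) :=
  {P | ∃ v ∈ U, P.submodule = K ∙ v}

theorem exists_smul_eq_of_mk_mem_linearSet {U : Submodule F V} {p : V} (hp0 : p ≠ 0)
    (hp : Projectivization.mk K p hp0 ∈ linearSet K U) : ∃ c : K, ∃ p' ∈ U, c • p' = p := by
  obtain ⟨p', hp', hpp'⟩ := hp
  have hpc : p ∈ K ∙ p' := by
    rw [← hpp', submodule_mk]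
    exact Submodule.mem_span_singleton_self p
  obtain ⟨c, hc⟩ := Submodule.mem_span_singleton.1 hpc
  exact ⟨c, p', hp', hc⟩

variable [Algebra F K] [IsScalarTower F K V]

theorem map_image_linearSet (f : V ≃ₗ[K] V) (U : Submodule F V) :
    Projectivization.map f.toLinearMap f.injective '' linearSet K U =
      linearSet K (U.map (f.toLinearMap.restrictScalars F)) := by
  ext P
  constructor
  · rintro ⟨Q, ⟨v, hvU, hv⟩, rfl⟩
    refine ⟨f v, ⟨v, hvU, rfl⟩, ?_⟩
    rw [submodule_map_eq_map_submodule, hv, Submodule.map_span, Set.image_singleton]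
    rfl
  · rintro ⟨_, ⟨v, hvU, rfl⟩, hP⟩
    have hv0 : v ≠ 0 := by
      rintro rfl
      exact ne_zero_of_submodule_eq_span hP (map_zero _)
    refine ⟨Projectivization.mk K v hv0, ⟨v, hvU, submodule_mk v hv0⟩, submodule_injective ?_⟩
    rw [submodule_map_eq_map_submodule, submodule_mk, hP, Submodule.map_span, Set.image_singleton]
    rfl

theorem span_range_basis_map {ι : Type*} (b : Module.Basis ι K V) (f : V ≃ₗ[K] V) :
    Submodule.span F (Set.range (b.map f)) =
      (Submodule.span F (Set.range b)).map (f.toLinearMap.restrictScalars F) := by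
  rw [Submodule.map_span, ← Set.range_comp]
  rfl

theorem map_image_linearSet_span_basis {ι : Type*} (b : Module.Basis ι K V) (f : V ≃ₗ[K] V) :
    Projectivization.map f.toLinearMap f.injective ''
        linearSet K (Submodule.span F (Set.range b)) =
      linearSet K (Submodule.span F (Set.range (b.map f))) := by
  rw [map_image_linearSet, span_range_basis_map]

theorem linearSet_span_basis_map_smul {ι : Type*} (b : Module.Basis ι K V) (k : Kˣ) :
    linearSet K (Submodule.span F (Set.range (b.map (LinearEquiv.smulOfUnit k)))) =
      linearSet K (Submodule.span F (Set.range b)) := by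
  rw [← map_image_linearSet_span_basis]
  convert Set.image_id _ using 2
  ext P : 1
  induction P using Projectivization.ind with
  | h v hv =>
    rw [map_mk, id, mk_eq_mk_iff]
    exact ⟨k, rfl⟩

theorem exists_basis_mem_span_and_linearSet_eq {ι : Type*} (b : Module.Basis ι K V)
    {P : Projectivization K V} {t : V} (hP : P ∈ linearSet K (Submodule.span F (Set.range b)))
    (ht : P.submodule = K ∙ t) :
    ∃ b' : Module.Basis ι K V, t ∈ Submodule.span F (Set.range b') ∧
      linearSet K (Submodule.span F (Set.range b')) =
        linearSet K (Submodule.span F (Set.range b)) := by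
  obtain ⟨t', ht'mem, ht'⟩ := hP
  obtain ⟨k, rfl⟩ := Submodule.span_singleton_eq_span_singleton.1 (ht'.symm.trans ht)
  refine ⟨b.map (LinearEquiv.smulOfUnit k), ?_, linearSet_span_basis_map_smul b k⟩
  rw [span_range_basis_map]
  exact ⟨t', ht'mem, rfl⟩

variable {ι : Type*} (b b' : Module.Basis ι K V)

theorem mem_range_algebraMap_of_smul_mem {p : V} {c : K}
    (hp : p ∈ Submodule.span F (Set.range b)) (hp0 : p ≠ 0)
    (hcp : c • p ∈ Submodule.span F (Set.range b)) : c ∈ Set.range (algebraMap F K) := by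
  simp only [b.mem_span_iff_repr_mem F, map_smul, Finsupp.smul_apply, smul_eq_mul] at hp hcp
  obtain ⟨i, hi⟩ := Finsupp.ne_iff.1 (b.repr.map_ne_zero_iff.2 hp0)
  have := div_mem (H := (algebraMap F K).fieldRange) (hcp i) (hp i)
  rwa [mul_div_cancel_right₀ c hi] at this

theorem mem_range_algebraMap_of_smul_add_smul_mem {p q : V} {c d : K}
    (hp : p ∈ Submodule.span F (Set.range b)) (hq : q ∈ Submodule.span F (Set.range b))
    (hpq : LinearIndependent K ![p, q])
    (hcd : c • p + d • q ∈ Submodule.span F (Set.range b)) : c ∈ Set.range (algebraMap F K) := by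
  simp only [b.mem_span_iff_repr_mem F, map_add, map_smul, Finsupp.add_apply, Finsupp.smul_apply,
    smul_eq_mul] at hp hq hcd
  obtain ⟨j, hj⟩ := Finsupp.ne_iff.1 (b.repr.map_ne_zero_iff.2 (hpq.ne_zero 1))
  obtain ⟨i, hi⟩ : ∃ i, b.repr p i * b.repr q j - b.repr p j * b.repr q i ≠ 0 := by
    by_contra! h
    refine hj (LinearIndependent.pair_iff.1 hpq (b.repr q j) (-b.repr p j) ?_).1
    refine b.repr.injective (Finsupp.ext fun i => ?_)
    simp only [map_add, map_smul, map_zero, Finsupp.add_apply, Finsupp.smul_apply,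
      Finsupp.zero_apply, smul_eq_mul]
    linear_combination h i
  let R := (algebraMap F K).fieldRange
  have hminor : c * (b.repr p i * b.repr q j - b.repr p j * b.repr q i) ∈ R := by
    convert sub_mem (mul_mem (s := R) (hcd i) (hq j)) (mul_mem (s := R) (hcd j) (hq i)) using 1
    ring
  have := div_mem hminor
    (sub_mem (mul_mem (s := R) (hp i) (hq j)) (mul_mem (s := R) (hp j) (hq i)))
  rwa [mul_div_cancel_right₀ c hi] at this

theorem span_basis_le_of_linearSet_subset {t : V} (ht0 : t ≠ 0)
    (ht : t ∈ Submodule.span F (Set.range b)) (ht' : t ∈ Submodule.span F (Set.range b'))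
    (hsub : linearSet K (Submodule.span F (Set.range b)) ⊆
      linearSet K (Submodule.span F (Set.range b'))) :
    Submodule.span F (Set.range b) ≤ Submodule.span F (Set.range b') := by
  intro p hp
  by_cases hpt : LinearIndependent K ![p, t]
  · have hpt' : LinearIndependent K ![p, p + t] := LinearIndependent.pair_add_right_iff.2 hpt
    have hp0 : p ≠ 0 := hpt.ne_zero 0
    have hpt0 : p + t ≠ 0 := hpt'.ne_zero 1
    obtain ⟨c, p', hp', rfl⟩ := exists_smul_eq_of_mk_mem_linearSet hp0
      (hsub ⟨p, hp, submodule_mk p hp0⟩)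
    obtain ⟨d, q', hq', hpq⟩ := exists_smul_eq_of_mk_mem_linearSet hpt0
      (hsub ⟨_, add_mem hp ht, submodule_mk _ hpt0⟩)
    rw [← hpq] at hpt'
    have hpq' : LinearIndependent K ![p', q'] := by
      have h := LinearIndependent.pair_add_smul_add_smul_iff (R := K) (x := p') (y := q')
        (a := c) (b := 0) (c := 0) (d := d)
      simp only [zero_smul, add_zero, zero_add] at h
      exact (h.1 hpt').1
    obtain ⟨x, hx⟩ : -c ∈ Set.range (algebraMap F K) := by
      refine mem_range_algebraMap_of_smul_add_smul_mem b' (d := d) hp' hq' hpq' ?_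
      convert ht' using 1
      linear_combination (norm := module) hpq
    rw [← neg_neg c, ← hx, ← map_neg, algebraMap_smul]
    exact Submodule.smul_mem _ _ hp'
  · rw [LinearIndependent.pair_symm_iff, LinearIndependent.pair_iff' ht0] at hpt
    push Not at hpt
    obtain ⟨c, rfl⟩ := hpt
    obtain ⟨x, rfl⟩ := mem_range_algebraMap_of_smul_mem b ht ht0 hp
    rw [algebraMap_smul]
    exact Submodule.smul_mem _ _ ht'

end LinearSets

section Plane

open Module (Basis finrank)
open Submodule (span)
open Set (range mem_range_self)

variable {F K : Type*} [Field F] [Field K] [Algebra F K]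

theorem basePlane_eq_linearSet :
    basePlane F K = linearSet K (span F (range (Pi.basisFun K (Fin 3)))) := by
  ext P
  simp only [basePlane, linearSet, Set.mem_ofPred_eq, Basis.mem_span_iff_repr_mem,
    Pi.basisFun_repr]
  constructor
  · rintro ⟨v, hv, rfl, hvF⟩
    exact ⟨v, hvF, submodule_mk v hv⟩
  · rintro ⟨v, hvF, hP⟩
    have hv := ne_zero_of_submodule_eq_span hP
    exact ⟨v, hv, submodule_injective (hP.trans (submodule_mk v hv).symm), hvF⟩

theorem isSubplane_iff_exists_basis {π : Set (PGPoint K)} :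
    IsSubplane F π ↔
      ∃ b : Basis (Fin 3) K (Fin 3 → K), π = linearSet K (span F (range b)) := by
  constructor
  · rintro ⟨f, rfl⟩
    refine ⟨(Pi.basisFun K (Fin 3)).map f, ?_⟩
    rw [basePlane_eq_linearSet, ← map_image_linearSet_span_basis]
    rfl
  · rintro ⟨b, rfl⟩
    refine ⟨b.equivFun.symm, ?_⟩
    have hb : (Pi.basisFun K (Fin 3)).map b.equivFun.symm = b :=
      Basis.eq_of_apply_eq fun i => by simp
    rw [basePlane_eq_linearSet, ← congrArg DFunLike.coe hb, ← map_image_linearSet_span_basis]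
    rfl

theorem mem_linf_iff {P : PGPoint K} {v : Fin 3 → K} (hv : P.submodule = K ∙ v) :
    P ∈ linf K ↔ v 2 = 0 := by
  rw [P.submodule_eq, Submodule.span_singleton_eq_span_singleton] at hv
  obtain ⟨c, rfl⟩ := hv
  rw [Pi.smul_apply, Units.smul_def, smul_eq_zero_iff_right c.ne_zero]
  rfl

theorem mem_splash_iff {π : Set (PGPoint K)} {X : PGPoint K} :
    X ∈ splash π ↔ X ∈ linf K ∧
      ∃ P ∈ π, ∃ Q ∈ π, P ≠ Q ∧ X.submodule ≤ P.submodule ⊔ Q.submodule := by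
  refine and_congr_right fun _ => ⟨?_, ?_⟩
  · rintro ⟨P, Q, hP, hQ, hPQ, _, ⟨W, hW, rfl⟩, hPW, hQW, hXW⟩
    have hsup : P.submodule ⊔ Q.submodule = W :=
      Submodule.eq_of_le_of_finrank_eq (sup_le hPW hQW)
        ((finrank_submodule_sup_submodule hPQ).trans hW.symm)
    exact ⟨P, hP, Q, hQ, hPQ, hsup ▸ hXW⟩
  · rintro ⟨P, hP, Q, hQ, hPQ, hX⟩
    exact ⟨P, Q, hP, hQ, hPQ, _, ⟨_, finrank_submodule_sup_submodule hPQ, rfl⟩,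
      le_sup_left (a := P.submodule), le_sup_right (a := P.submodule), hX⟩

/-- Homogeneous coordinates of the point in which the line joining the points with coordinates `p`
and `q` meets `ℓ∞`; it is `0` when there is no such unique point. -/
def meetInfty (p q : Fin 3 → K) : Fin 3 → K := q 2 • p - p 2 • q

theorem meetInfty_apply_two (p q : Fin 3 → K) : meetInfty p q 2 = 0 := by
  simp only [meetInfty, Pi.sub_apply, Pi.smul_apply, smul_eq_mul]
  ring

theorem linearIndependent_of_meetInfty_ne_zero {p q : Fin 3 → K} (h : meetInfty p q ≠ 0) :
    LinearIndependent K ![p, q] := by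
  have hp : p ≠ 0 := by
    rintro rfl
    exact h (by simp [meetInfty])
  refine (LinearIndependent.pair_iff' hp).2 fun c hc => h ?_
  rw [← hc]
  simp only [meetInfty, Pi.smul_apply, smul_eq_mul]
  module

theorem meetInfty_ne_zero {p q : Fin 3 → K} (hpq : LinearIndependent K ![p, q])
    (h : ¬(p 2 = 0 ∧ q 2 = 0)) : meetInfty p q ≠ 0 := by
  intro h0
  have := LinearIndependent.pair_iff.1 hpq (q 2) (-p 2) (by rw [← h0, meetInfty]; module)
  exact h ⟨neg_eq_zero.1 this.2, this.1⟩

theorem meetInfty_mem_span_singleton {p q x : Fin 3 → K} (hx : x ∈ span K {p, q}) (hx0 : x ≠ 0)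
    (hx2 : x 2 = 0) : meetInfty p q ∈ K ∙ x := by
  obtain ⟨α, β, rfl⟩ := Submodule.mem_span_pair.1 hx
  simp only [Pi.add_apply, Pi.smul_apply, smul_eq_mul] at hx2
  rcases eq_or_ne α 0 with rfl | hα
  · have hβ : β ≠ 0 := by
      rintro rfl
      exact hx0 (by module)
    refine (Submodule.smul_mem_iff _ hβ).1 (Submodule.mem_span_singleton.2 ⟨-p 2, ?_⟩)
    rw [meetInfty]
    linear_combination (norm := module) -hx2 • p
  · refine (Submodule.smul_mem_iff _ hα).1 (Submodule.mem_span_singleton.2 ⟨q 2, ?_⟩)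
    rw [meetInfty]
    linear_combination (norm := module) hx2 • q

theorem mem_splash_linearSet_iff {U : Submodule F (Fin 3 → K)}
    (hU : (linearSet K U ∩ linf K).Subsingleton) {X : PGPoint K} :
    X ∈ splash (linearSet K U) ↔ ∃ p ∈ U, ∃ q ∈ U, X.submodule = K ∙ meetInfty p q := by
  rw [mem_splash_iff]
  constructor
  · rintro ⟨hX, P, ⟨p, hpU, hp⟩, Q, ⟨q, hqU, hq⟩, hPQ, hXPQ⟩
    refine ⟨p, hpU, q, hqU, submodule_eq_span_of_mem ?_ ?_⟩
    · refine meetInfty_ne_zero ((ne_iff_linearIndependent hp hq).1 hPQ) fun h => hPQ ?_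
      exact hU ⟨⟨p, hpU, hp⟩, (mem_linf_iff hp).2 h.1⟩ ⟨⟨q, hqU, hq⟩, (mem_linf_iff hq).2 h.2⟩
    · have hrep : X.rep ∈ span K {p, q} := by
        rw [Submodule.span_insert, ← hp, ← hq]
        exact hXPQ (X.submodule_eq ▸ Submodule.mem_span_singleton_self _)
      rw [X.submodule_eq]
      exact meetInfty_mem_span_singleton hrep X.rep_nonzero ((mem_linf_iff X.submodule_eq).1 hX)
  · rintro ⟨p, hpU, q, hqU, hX⟩
    have hpq := linearIndependent_of_meetInfty_ne_zero (ne_zero_of_submodule_eq_span hX)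
    have hp0 : p ≠ 0 := hpq.ne_zero 0
    have hq0 : q ≠ 0 := hpq.ne_zero 1
    refine ⟨(mem_linf_iff hX).2 (meetInfty_apply_two p q), Projectivization.mk K p hp0,
      ⟨p, hpU, submodule_mk p hp0⟩, Projectivization.mk K q hq0, ⟨q, hqU, submodule_mk q hq0⟩,
      (ne_iff_linearIndependent (submodule_mk p hp0) (submodule_mk q hq0)).2 hpq, ?_⟩
    rw [hX, submodule_mk, submodule_mk, ← Submodule.span_insert,
      Submodule.span_singleton_le_iff_mem, Submodule.mem_span_pair]
    exact ⟨q 2, -p 2, by rw [meetInfty]; module⟩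

/-- The basis `b` is adapted to a tangency at `b 0`: the subplane consisting of the points with
coordinates in the `F`-span of `b` meets `ℓ∞` in the point `b 0` only. -/
structure IsTangentBasis (F : Type*) {K : Type*} [Field F] [Field K] [Algebra F K]
    (b : Basis (Fin 3) K (Fin 3 → K)) : Prop where
  apply_zero : b 0 2 = 0
  linearIndependent : LinearIndependent F ![b 1 2, b 2 2]

theorem mem_span_range_fin_three {R M : Type*} [Semiring R] [AddCommMonoid M] [Module R M]
    {v : Fin 3 → M} {m : M} :
    m ∈ span R (range v) ↔ ∃ x y z : R, x • v 0 + y • v 1 + z • v 2 = m := by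
  simp only [Submodule.mem_span_range_iff_exists_fun, Fin.sum_univ_three]
  exact ⟨fun ⟨c, hc⟩ => ⟨c 0, c 1, c 2, hc⟩, fun ⟨x, y, z, h⟩ => ⟨![x, y, z], h⟩⟩

namespace IsTangentBasis

variable {b : Basis (Fin 3) K (Fin 3 → K)}

theorem exists_eq_smul_of_apply_two_eq_zero (hb : IsTangentBasis F b) {p : Fin 3 → K}
    (hp : p ∈ span F (range b)) (hp2 : p 2 = 0) : ∃ x : F, p = x • b 0 := by
  obtain ⟨x, y, z, rfl⟩ := mem_span_range_fin_three.1 hp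
  simp only [Pi.add_apply, Pi.smul_apply, hb.apply_zero, smul_zero, zero_add] at hp2
  obtain ⟨rfl, rfl⟩ := LinearIndependent.pair_iff.1 hb.linearIndependent y z hp2
  exact ⟨x, by module⟩

theorem linearSet_inter_linf (hb : IsTangentBasis F b) {T : PGPoint K}
    (hT : T.submodule = K ∙ b 0) : linearSet K (span F (range b)) ∩ linf K = {T} := by
  refine Set.eq_singleton_iff_unique_mem.2 ⟨⟨⟨b 0, Submodule.subset_span ⟨0, rfl⟩, hT⟩,
    (mem_linf_iff hT).2 hb.apply_zero⟩, ?_⟩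
  rintro P ⟨⟨p, hp, hP⟩, hPinf⟩
  obtain ⟨x, rfl⟩ := hb.exists_eq_smul_of_apply_two_eq_zero hp ((mem_linf_iff hP).1 hPinf)
  refine submodule_injective (hP.trans ?_)
  rw [hT, ← algebraMap_smul K x, Submodule.span_singleton_smul_eq]
  exact (left_ne_zero_of_smul
    ((algebraMap_smul K x (b 0)).symm ▸ ne_zero_of_submodule_eq_span hP)).isUnit

theorem linearIndependent_meetInfty (hb : IsTangentBasis F b) :
    LinearIndependent K ![b 0, meetInfty (b 1) (b 2)] := by
  refine LinearIndependent.pair_iff.2 fun x y h => ?_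
  have hcoord := Fintype.linearIndependent_iff.1 b.linearIndependent
    ![x, y * b 2 2, -(y * b 1 2)] (by
      rw [Fin.sum_univ_three, ← h, meetInfty]
      simp only [Matrix.cons_val]
      module)
  have hb2 : b 2 2 ≠ 0 := hb.linearIndependent.ne_zero 1
  exact ⟨hcoord 0, (mul_eq_zero.1 (hcoord 1)).resolve_right hb2⟩

theorem meetInfty_combination (hb : IsTangentBasis F b) (x y z x' y' z' : F) :
    meetInfty (x • b 0 + y • b 1 + z • b 2) (x' • b 0 + y' • b 1 + z' • b 2) =
      (y * z' - y' * z) • meetInfty (b 1) (b 2) +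
        ((x * y' - x' * y) • b 1 2 + (x * z' - x' * z) • b 2 2) • b 0 := by
  ext i
  simp only [meetInfty, Pi.add_apply, Pi.sub_apply, Pi.smul_apply, hb.apply_zero,
    smul_eq_mul]
  simp only [Algebra.smul_def, map_sub, map_mul]
  ring

end IsTangentBasis

/-- The point set `{[t]} ∪ {[w + s t] : s ∈ L}`: the shape of a tangent splash with centre `[t]`. -/
def normalSplash (t w : Fin 3 → K) (L : Submodule F K) : Set (PGPoint K) :=
  {P | P.submodule = K ∙ t ∨ ∃ s ∈ L, P.submodule = K ∙ (w + s • t)}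

theorem IsTangentBasis.splash_linearSet {b : Basis (Fin 3) K (Fin 3 → K)}
    (hb : IsTangentBasis F b) :
    splash (linearSet K (span F (range b))) =
      normalSplash (b 0) (meetInfty (b 1) (b 2)) (span F {b 1 2, b 2 2}) := by
  have hT := hb.linearSet_inter_linf (submodule_mk (b 0) (b.ne_zero 0))
  ext X
  rw [mem_splash_linearSet_iff (hT ▸ Set.subsingleton_singleton)]
  constructor
  · rintro ⟨p, hp, q, hq, hX⟩
    obtain ⟨x, y, z, rfl⟩ := mem_span_range_fin_three.1 hp
    obtain ⟨x', y', z', rfl⟩ := mem_span_range_fin_three.1 hq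
    rw [hb.meetInfty_combination] at hX
    rcases eq_or_ne (y * z' - y' * z) 0 with hD | hD
    · rw [hD, zero_smul, zero_add] at hX
      have hs := left_ne_zero_of_smul (ne_zero_of_submodule_eq_span hX)
      exact Or.inl (hX.trans (Submodule.span_singleton_smul_eq hs.isUnit _))
    · refine Or.inr ⟨(y * z' - y' * z)⁻¹ • ((x * y' - x' * y) • b 1 2 + (x * z' - x' * z) • b 2 2),
        Submodule.smul_mem _ _ (Submodule.mem_span_pair.2 ⟨_, _, rfl⟩), ?_⟩
      have hD' : algebraMap F K (y * z' - y' * z) ≠ 0 :=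
        (map_ne_zero_iff _ (algebraMap F K).injective).2 hD
      rw [hX, eq_comm, ← Submodule.span_singleton_smul_eq hD'.isUnit, algebraMap_smul, smul_add,
        smul_assoc, smul_inv_smul₀ hD]
  · rintro (hX | ⟨s, hs, hX⟩)
    · refine ⟨b 0, Submodule.subset_span ⟨0, rfl⟩, b 1, Submodule.subset_span ⟨1, rfl⟩, ?_⟩
      have hb1 : b 1 2 ≠ 0 := hb.linearIndependent.ne_zero 0
      rw [hX, meetInfty, hb.apply_zero, zero_smul, sub_zero,
        Submodule.span_singleton_smul_eq hb1.isUnit]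
    · obtain ⟨x, y, rfl⟩ := Submodule.mem_span_pair.1 hs
      refine ⟨y • b 0 + (1 : F) • b 1 + (0 : F) • b 2, mem_span_range_fin_three.2 ⟨y, 1, 0, rfl⟩,
        -x • b 0 + (0 : F) • b 1 + (1 : F) • b 2, mem_span_range_fin_three.2 ⟨-x, 0, 1, rfl⟩, ?_⟩
      rw [hX, hb.meetInfty_combination]
      simp

theorem finrank_span_range_basis (b : Basis (Fin 3) K (Fin 3 → K)) :
    finrank F (span F (range b)) = 3 :=
  Module.finrank_eq_card_basis (b.restrictScalars F)

theorem exists_pair_of_ker_eq_span_singleton {M N : Type*} [AddCommGroup M] [Module F M]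
    [AddCommGroup N] [Module F N] (φ : M →ₗ[F] N) {t : M} (ht0 : t ≠ 0)
    (hker : LinearMap.ker φ = F ∙ t) (hM : finrank F M = 3) :
    ∃ u v : M, LinearIndependent F ![φ u, φ v] ∧ span F (range ![t, u, v]) = ⊤ := by
  have : Module.Finite F M := Module.finite_of_finrank_eq_succ hM
  have hrange : finrank F (LinearMap.range φ) = 2 := by
    have h := φ.finrank_range_add_finrank_ker
    rw [hker, finrank_span_singleton ht0, hM] at h
    omega
  let β := Module.finBasisOfFinrankEq F (LinearMap.range φ) hrange
  obtain ⟨u, hu⟩ := (β 0).2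
  obtain ⟨v, hv⟩ := (β 1).2
  refine ⟨u, v, ?_, eq_top_iff.2 fun p _ => ?_⟩
  · have hβ : (LinearMap.range φ).subtype ∘ β = ![φ u, φ v] := by
      funext i
      fin_cases i
      exacts [hu.symm, hv.symm]
    exact hβ ▸ β.linearIndependent.map' _ (LinearMap.range φ).ker_subtype
  · have hp := congrArg Subtype.val (β.sum_repr ⟨φ p, p, rfl⟩)
    set y := β.repr ⟨φ p, p, rfl⟩ 0
    set z := β.repr ⟨φ p, p, rfl⟩ 1
    rw [Fin.sum_univ_two, Submodule.coe_add, Submodule.coe_smul, Submodule.coe_smul, ← hu,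
      ← hv] at hp
    have hpker : p - (y • u + z • v) ∈ LinearMap.ker φ := by
      rw [LinearMap.mem_ker, map_sub, map_add, map_smul, map_smul, hp, sub_self]
    rw [hker] at hpker
    obtain ⟨x, hx⟩ := Submodule.mem_span_singleton.1 hpker
    refine mem_span_range_fin_three.2 ⟨x, y, z, ?_⟩
    simp only [Matrix.cons_val, hx]
    module

theorem exists_smul_eq_of_inter_linf_eq {b : Basis (Fin 3) K (Fin 3 → K)} {T : PGPoint K}
    {t p : Fin 3 → K} (hT : linearSet K (span F (range b)) ∩ linf K = {T})
    (ht : T.submodule = K ∙ t) (htb : t ∈ span F (range b)) (hp : p ∈ span F (range b))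
    (hp2 : p 2 = 0) : ∃ x : F, x • t = p := by
  rcases eq_or_ne p 0 with rfl | hp0
  · exact ⟨0, zero_smul _ _⟩
  have hpT : Projectivization.mk K p hp0 = T :=
    hT.le ⟨⟨p, hp, submodule_mk p hp0⟩, (mem_linf_iff (submodule_mk p hp0)).2 hp2⟩
  have hpt : p ∈ K ∙ t := by
    rw [← ht, ← hpT, submodule_mk]
    exact Submodule.mem_span_singleton_self p
  obtain ⟨c, rfl⟩ := Submodule.mem_span_singleton.1 hpt
  obtain ⟨x, rfl⟩ := mem_range_algebraMap_of_smul_mem b htb (ne_zero_of_submodule_eq_span ht) hp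
  exact ⟨x, (algebraMap_smul K x t).symm⟩

theorem exists_pair_span_eq_of_inter_linf_eq {b : Basis (Fin 3) K (Fin 3 → K)} {T : PGPoint K}
    {t : Fin 3 → K} (hT : linearSet K (span F (range b)) ∩ linf K = {T})
    (ht : T.submodule = K ∙ t) (htb : t ∈ span F (range b)) :
    ∃ u v : Fin 3 → K, LinearIndependent F ![u 2, v 2] ∧
      span F (range ![t, u, v]) = span F (range b) := by
  have ht0 := ne_zero_of_submodule_eq_span ht
  have ht2 : t 2 = 0 :=
    (mem_linf_iff ht).1 (hT ▸ Set.mem_singleton T : T ∈ linearSet K (span F (range b)) ∩ linf K).2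
  let φ : span F (range b) →ₗ[F] K :=
    ((LinearMap.proj (R := K) 2).restrictScalars F).comp (span F (range b)).subtype
  have hker : LinearMap.ker φ = F ∙ ⟨t, htb⟩ := by
    ext ⟨p, hp⟩
    rw [LinearMap.mem_ker, Submodule.mem_span_singleton]
    constructor
    · intro (hp2 : p 2 = 0)
      obtain ⟨x, hx⟩ := exists_smul_eq_of_inter_linf_eq hT ht htb hp hp2
      exact ⟨x, Subtype.ext hx⟩
    · rintro ⟨x, hx⟩
      have hxp : x • t = p := congrArg Subtype.val hx
      change p 2 = 0
      rw [← hxp, Pi.smul_apply, ht2, smul_zero]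
  obtain ⟨u, v, huv, hspan⟩ := exists_pair_of_ker_eq_span_singleton φ
    (fun h => ht0 (congrArg Subtype.val h)) hker (finrank_span_range_basis b)
  refine ⟨u, v, huv, ?_⟩
  have h := congrArg (Submodule.map (span F (range b)).subtype) hspan
  rw [Submodule.map_span, Submodule.map_subtype_top, ← Set.range_comp] at h
  refine Eq.trans (congrArg (span F ∘ range) ?_) h
  funext i
  fin_cases i <;> rfl

theorem exists_isTangentBasis {π : Set (PGPoint K)} {T : PGPoint K} {t : Fin 3 → K}
    (hπ : IsSubplane F π) (hT : π ∩ linf K = {T}) (ht : T.submodule = K ∙ t) :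
    ∃ b : Basis (Fin 3) K (Fin 3 → K), IsTangentBasis F b ∧ b 0 = t ∧
      π = linearSet K (span F (range b)) := by
  obtain ⟨b₀, rfl⟩ := isSubplane_iff_exists_basis.1 hπ
  have hTmem : T ∈ linearSet K (span F (range b₀)) ∩ linf K := hT ▸ Set.mem_singleton T
  obtain ⟨b, htb, hb⟩ := exists_basis_mem_span_and_linearSet_eq b₀ hTmem.1 ht
  rw [← hb] at hT ⊢
  obtain ⟨u, v, huv, hspan⟩ := exists_pair_span_eq_of_inter_linf_eq hT ht htb
  have htop : ⊤ ≤ span K (range ![t, u, v]) := by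
    rw [← b.span_eq, Submodule.span_le, ← Submodule.coe_restrictScalars F]
    exact Submodule.subset_span.trans (hspan ▸ Submodule.span_le_restrictScalars F K _)
  refine ⟨basisOfTopLeSpanOfCardEqFinrank ![t, u, v] htop (by simp), ⟨?_, ?_⟩, ?_, ?_⟩
  all_goals simp only [coe_basisOfTopLeSpanOfCardEqFinrank]
  exacts [(mem_linf_iff ht).1 hTmem.2, huv, rfl, by rw [hspan]]

theorem linearIndependent_pair_smul_add_smul_iff {V : Type*} [AddCommGroup V] [Module K V]
    {x y : V} (a : K) {b : K} (hb : b ≠ 0) :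
    LinearIndependent K ![x, a • x + b • y] ↔ LinearIndependent K ![x, y] := by
  have h := LinearIndependent.pair_add_smul_add_smul_iff (R := K) (x := x) (y := y)
    (a := 1) (b := 0) (c := a) (d := b)
  rwa [one_smul, zero_smul, add_zero, one_mul, zero_mul, and_iff_left hb] at h

theorem exists_eq_smul_of_mk_mem_normalSplash {t w v : Fin 3 → K} {L : Submodule F K}
    (htv : LinearIndependent K ![t, v]) {hv0 : v ≠ 0}
    (hv : Projectivization.mk K v hv0 ∈ normalSplash t w L) :
    ∃ s ∈ L, ∃ c : K, c ≠ 0 ∧ v = c • (w + s • t) := by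
  rcases hv with hv | ⟨s, hs, hv⟩
  · exact absurd rfl ((ne_iff_linearIndependent hv (submodule_mk v hv0)).2 htv)
  · obtain ⟨c, hc⟩ :=
      Submodule.span_singleton_eq_span_singleton.1 (hv.symm.trans (submodule_mk v hv0))
    exact ⟨s, hs, c, c.ne_zero, hc.symm⟩

theorem exists_mul_inv_mem_of_normalSplash_eq {t w t' w' : Fin 3 → K} {L L' : Submodule F K}
    (htt' : LinearIndependent K ![t, t']) (h : normalSplash t w L = normalSplash t' w' L') :
    ∃ μ : K, μ ≠ 0 ∧ ∀ c ∈ L, c ≠ 0 → μ * c⁻¹ ∈ L' := by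
  have ht't := LinearIndependent.pair_symm_iff.1 htt'
  obtain ⟨s, hs, k, hk, ht'⟩ := exists_eq_smul_of_mk_mem_normalSplash htt'
    (h.ge (Or.inl (submodule_mk t' (htt'.ne_zero 1))))
  obtain ⟨s', hs', m, hm, ht⟩ := exists_eq_smul_of_mk_mem_normalSplash ht't
    (h.le (Or.inl (submodule_mk t (htt'.ne_zero 0))))
  have ht'w' : LinearIndependent K ![t', w'] := by
    have ht_eq : t = (m * s') • t' + m • w' := by rw [ht]; module
    rwa [ht_eq, linearIndependent_pair_smul_add_smul_iff _ hm] at ht't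
  refine ⟨(k * m)⁻¹, inv_ne_zero (mul_ne_zero hk hm), fun c hc hc0 => ?_⟩
  have hcm : c * m ≠ 0 := mul_ne_zero hc0 hm
  have hv : w + (s + c) • t = (k⁻¹ + c * m * s') • t' + (c * m) • w' :=
    calc w + (s + c) • t = k⁻¹ • t' + c • t := by
          rw [ht', inv_smul_smul₀ hk]
          module
      _ = (k⁻¹ + c * m * s') • t' + (c * m) • w' := by
          rw [ht]
          module
  have ht'v : LinearIndependent K ![t', w + (s + c) • t] := by
    rwa [hv, linearIndependent_pair_smul_add_smul_iff _ hcm]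
  obtain ⟨e, he, n, hn, hvn⟩ := exists_eq_smul_of_mk_mem_normalSplash ht'v
    (h.le (Or.inr ⟨s + c, add_mem hs hc, submodule_mk _ (ht'v.ne_zero 1)⟩))
  obtain ⟨hne, rfl⟩ := ht'w'.eq_of_pair (s := k⁻¹ + c * m * s') (s' := n * e) (t' := n)
    (by rw [← hv, hvn]; module)
  convert sub_mem he hs' using 1
  field_simp at hne ⊢
  linear_combination hne

theorem exists_smul_of_normalSplash_subset {t w w' : Fin 3 → K} {L L' : Submodule F K}
    (htw' : LinearIndependent K ![t, w']) (h : normalSplash t w' L' ⊆ normalSplash t w L) :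
    ∃ l : K, l ≠ 0 ∧ (∃ e ∈ L, w' = l • (w + e • t)) ∧ ∀ s ∈ L', l⁻¹ * s ∈ L := by
  have hw'0 : w' ≠ 0 := htw'.ne_zero 1
  obtain ⟨e, he, l, hl, hw'⟩ := exists_eq_smul_of_mk_mem_normalSplash htw'
    (h (Or.inr ⟨0, zero_mem L', by rw [submodule_mk w' hw'0, zero_smul, add_zero]⟩))
  have htw : LinearIndependent K ![t, w] := by
    have hw'_eq : w' = (l * e) • t + l • w := by rw [hw']; module
    rwa [hw'_eq, linearIndependent_pair_smul_add_smul_iff _ hl] at htw'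
  refine ⟨l, hl, ⟨e, he, hw'⟩, fun s hs => ?_⟩
  have htv : LinearIndependent K ![t, w' + s • t] := by
    have := (linearIndependent_pair_smul_add_smul_iff s one_ne_zero).2 htw'
    rwa [one_smul, add_comm] at this
  obtain ⟨e', he', n, hn, hv⟩ := exists_eq_smul_of_mk_mem_normalSplash htv
    (h (Or.inr ⟨s, hs, submodule_mk _ (htv.ne_zero 1)⟩))
  obtain ⟨hne, rfl⟩ := htw.eq_of_pair (s := l * e + s) (t := l) (s' := n * e') (t' := n)
    (by linear_combination (norm := (rw [hw']; module)) hv)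
  convert sub_mem he' he using 1
  field_simp
  linear_combination hne

open Polynomial in
theorem quadratic_coeff_eq_zero {r : K} (hr : r ∉ Set.range (algebraMap F K))
    (hdeg : (minpoly F r).natDegree ≠ 2) {x y z : F}
    (h : algebraMap F K x * r ^ 2 + algebraMap F K y * r + algebraMap F K z = 0) :
    x = 0 ∧ y = 0 ∧ z = 0 := by
  set p : F[X] := C x * X ^ 2 + C y * X + C z with hp
  have hp0 : p = 0 := by
    by_contra hp0
    have hroot : aeval r p = 0 := by simpa [hp] using h
    have hint : IsIntegral F r := (isAlgebraic_iff_isIntegral).1 ⟨p, hp0, hroot⟩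
    have hpos := minpoly.natDegree_pos hint
    have hle : (minpoly F r).natDegree ≤ 2 :=
      (natDegree_le_of_dvd (minpoly.dvd F r hroot) hp0).trans natDegree_quadratic_le
    exact hr (minpoly.natDegree_eq_one_iff.1 (by omega))
  refine ⟨?_, ?_, ?_⟩
  · simpa [hp] using congrArg (coeff · 2) hp0
  · simpa [hp] using congrArg (coeff · 1) hp0
  · simpa [hp] using congrArg (coeff · 0) hp0

theorem linearIndependent_inv {a b : K} (hab : LinearIndependent F ![a, b])
    (hdeg : (minpoly F (b / a)).natDegree ≠ 2) :
    LinearIndependent F ![a⁻¹, b⁻¹, (a + b)⁻¹] := by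
  have ha : a ≠ 0 := hab.ne_zero 0
  have hb : b ≠ 0 := hab.ne_zero 1
  have hadd : a + b ≠ 0 := (LinearIndependent.pair_add_right_iff.2 hab).ne_zero 1
  have hr : b / a ∉ Set.range (algebraMap F K) := by
    rintro ⟨x, hx⟩
    refine (LinearIndependent.pair_iff' ha).1 hab x ?_
    rw [Algebra.smul_def, hx, div_mul_cancel₀ _ ha]
  refine Fintype.linearIndependent_iff.2 fun c hc => ?_
  simp only [Fin.sum_univ_three, Matrix.cons_val, Algebra.smul_def] at hc
  have hquad : algebraMap F K (c 0) * (b / a) ^ 2 + algebraMap F K (c 0 + c 1 + c 2) * (b / a) +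
      algebraMap F K (c 1) = 0 := by
    simp only [map_add]
    field_simp at hc ⊢
    linear_combination hc
  obtain ⟨h0, hsum, h1⟩ := quadratic_coeff_eq_zero hr hdeg hquad
  have h2 : c 2 = 0 := by simpa [h0, h1] using hsum
  intro i
  fin_cases i
  exacts [h0, h1, h2]

theorem not_forall_mul_inv_mem_span_pair {a b a' b' μ : K} (hab : LinearIndependent F ![a, b])
    (hdeg : (minpoly F (b / a)).natDegree ≠ 2) (hμ : μ ≠ 0) :
    ¬∀ c ∈ span F {a, b}, c ≠ 0 → μ * c⁻¹ ∈ span F {a', b'} := by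
  intro h
  have hamem : a ∈ span F {a, b} := Submodule.subset_span (by simp)
  have hbmem : b ∈ span F {a, b} := Submodule.subset_span (by simp)
  have hadd : a + b ≠ 0 := (LinearIndependent.pair_add_right_iff.2 hab).ne_zero 1
  have hind := (linearIndependent_inv hab hdeg).map' (LinearMap.mulLeft F μ)
    (LinearMap.ker_eq_bot.2 (mul_right_injective₀ hμ))
  have hle : span F (range (LinearMap.mulLeft F μ ∘ ![a⁻¹, b⁻¹, (a + b)⁻¹])) ≤
      span F (range ![a', b']) := by
    rw [Submodule.span_le, Set.range_subset_iff, Matrix.range_cons_cons_empty]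
    intro i
    fin_cases i
    exacts [h a hamem (hab.ne_zero 0), h b hbmem (hab.ne_zero 1), h _ (add_mem hamem hbmem) hadd]
  have : Module.Finite F (span F (range ![a', b'])) :=
    Module.Finite.span_of_finite F (Set.finite_range _)
  have hrank : 3 ≤ 2 :=
    calc 3 = finrank F (span F (range (LinearMap.mulLeft F μ ∘ ![a⁻¹, b⁻¹, (a + b)⁻¹]))) :=
          (finrank_span_eq_card hind).symm
      _ ≤ finrank F (span F (range ![a', b'])) := Submodule.finrank_mono hle
      _ ≤ 2 := finrank_range_le_card ![a', b']
  omega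

theorem linearIndependent_pair_mul_left_iff {k : K} (hk : k ≠ 0) {x y : K} :
    LinearIndependent F ![k * x, k * y] ↔ LinearIndependent F ![x, y] := by
  have h : LinearMap.mulLeft F k ∘ ![x, y] = ![k * x, k * y] := by
    funext i
    fin_cases i <;> rfl
  rw [← h, LinearMap.linearIndependent_iff _ (LinearMap.ker_eq_bot.2 (mul_right_injective₀ hk))]

theorem IsTangentBasis.span_apply_zero_eq {b b' : Basis (Fin 3) K (Fin 3 → K)}
    (hb : IsTangentBasis F b) (hb' : IsTangentBasis F b')
    (hdeg : (minpoly F (b 2 2 / b 1 2)).natDegree ≠ 2)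
    (h : splash (linearSet K (span F (range b))) = splash (linearSet K (span F (range b')))) :
    K ∙ b 0 = K ∙ b' 0 := by
  rw [hb.splash_linearSet, hb'.splash_linearSet] at h
  have hb0 := submodule_mk (K := K) (b 0) (b.ne_zero 0)
  have hb'0 := submodule_mk (K := K) (b' 0) (b'.ne_zero 0)
  by_contra hne
  have hbb' : Projectivization.mk K (b 0) (b.ne_zero 0) ≠ Projectivization.mk K _ (b'.ne_zero 0) :=
    fun h => hne (by rw [← hb0, ← hb'0, h])
  obtain ⟨μ, hμ, hmem⟩ :=
    exists_mul_inv_mem_of_normalSplash_eq ((ne_iff_linearIndependent hb0 hb'0).1 hbb') h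
  exact not_forall_mul_inv_mem_span_pair hb.linearIndependent hdeg hμ hmem

theorem eq_of_splash_eq (hFK : ∀ r : K, (minpoly F r).natDegree ≠ 2) {π π' : Set (PGPoint K)}
    {T T' : PGPoint K} (hπ : IsSubplane F π) (hπ' : IsSubplane F π') (hT : π ∩ linf K = {T})
    (hT' : π' ∩ linf K = {T'}) (h : splash π = splash π') : T = T' := by
  obtain ⟨b, hb, hb0, rfl⟩ := exists_isTangentBasis hπ hT T.submodule_eq
  obtain ⟨b', hb', hb'0, rfl⟩ := exists_isTangentBasis hπ' hT' T'.submodule_eq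
  refine submodule_injective ?_
  rw [T.submodule_eq, T'.submodule_eq, ← hb0, ← hb'0]
  exact hb.span_apply_zero_eq hb' (hFK _) h

/-- The linear map which fixes the vectors with third coordinate `0` and sends the third standard
basis vector to `u`; every perspectivity of the plane with axis `ℓ∞` is induced by exactly one
of these. -/
noncomputable def perspectivity (u : {u : Fin 3 → K // u 2 ≠ 0}) : (Fin 3 → K) ≃ₗ[K] (Fin 3 → K) :=
  LinearEquiv.dilatransvection (f := LinearMap.proj 2) (v := u.1 - Pi.single 2 1)
    (by simpa using u.2)

theorem perspectivity_apply (u : {u : Fin 3 → K // u 2 ≠ 0}) (p : Fin 3 → K) :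
    perspectivity u p = p + p 2 • (u.1 - Pi.single 2 1) :=
  LinearEquiv.dilatransvection.apply

theorem perspectivity_apply_two (u : {u : Fin 3 → K // u 2 ≠ 0}) (p : Fin 3 → K) :
    perspectivity u p 2 = u.1 2 * p 2 := by
  rw [perspectivity_apply]
  simp only [Pi.add_apply, Pi.smul_apply, Pi.sub_apply, Pi.single_eq_same, smul_eq_mul]
  ring

theorem perspectivity_apply_of_apply_two_eq_zero (u : {u : Fin 3 → K // u 2 ≠ 0})
    {p : Fin 3 → K} (hp : p 2 = 0) : perspectivity u p = p := by
  rw [perspectivity_apply, hp, zero_smul, add_zero]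

theorem meetInfty_perspectivity (u : {u : Fin 3 → K // u 2 ≠ 0}) (p q : Fin 3 → K) :
    meetInfty (perspectivity u p) (perspectivity u q) = u.1 2 • meetInfty p q := by
  rw [meetInfty, perspectivity_apply_two, perspectivity_apply_two, perspectivity_apply,
    perspectivity_apply, meetInfty]
  module

theorem hmap_perspectivity_image (u : {u : Fin 3 → K // u 2 ≠ 0})
    (b : Basis (Fin 3) K (Fin 3 → K)) :
    hmap (perspectivity u) '' linearSet K (span F (range b)) =
      linearSet K (span F (range (b.map (perspectivity u)))) :=
  map_image_linearSet_span_basis b _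

namespace IsTangentBasis

variable {b b' : Basis (Fin 3) K (Fin 3 → K)}

theorem map_perspectivity (hb : IsTangentBasis F b) (u : {u : Fin 3 → K // u 2 ≠ 0}) :
    IsTangentBasis F (b.map (perspectivity u)) where
  apply_zero := by
    rw [Basis.map_apply, perspectivity_apply_two, hb.apply_zero, mul_zero]
  linearIndependent := by
    simp only [Basis.map_apply, perspectivity_apply_two]
    exact (linearIndependent_pair_mul_left_iff u.2).2 hb.linearIndependent

theorem splash_map_perspectivity (hb : IsTangentBasis F b) (u : {u : Fin 3 → K // u 2 ≠ 0}) :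
    splash (linearSet K (span F (range (b.map (perspectivity u))))) =
      splash (linearSet K (span F (range b))) := by
  have hsub {c : Basis (Fin 3) K (Fin 3 → K)} (hc : IsTangentBasis F c) :
      (linearSet K (span F (range c)) ∩ linf K).Subsingleton :=
    hc.linearSet_inter_linf (submodule_mk (c 0) (c.ne_zero 0)) ▸ Set.subsingleton_singleton
  ext X
  rw [mem_splash_linearSet_iff (hsub (hb.map_perspectivity u)), mem_splash_linearSet_iff (hsub hb),
    span_range_basis_map]
  simp only [Submodule.mem_map, exists_exists_and_eq_and, LinearMap.coe_restrictScalars,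
    LinearEquiv.coe_coe, meetInfty_perspectivity, Submodule.span_singleton_smul_eq u.2.isUnit]

theorem injective_hmap_perspectivity_image (hb : IsTangentBasis F b) :
    Function.Injective fun u => hmap (perspectivity u) '' linearSet K (span F (range b)) := by
  intro u u' h
  simp only [hmap_perspectivity_image] at h
  have h0 (u) : b 0 ∈ span F (range (b.map (perspectivity u))) := Submodule.subset_span
    ⟨0, (b.map_apply _ 0).trans (perspectivity_apply_of_apply_two_eq_zero u hb.apply_zero)⟩
  have hle := span_basis_le_of_linearSet_subset _ _ (b.ne_zero 0) (h0 u) (h0 u') h.le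
  have hmem (i) : b i 2 • (u.1 - u'.1) ∈ span F (range (b.map (perspectivity u'))) := by
    convert sub_mem (hle (Submodule.subset_span ⟨i, b.map_apply _ i⟩))
      (Submodule.subset_span ⟨i, b.map_apply _ i⟩) using 1
    rw [perspectivity_apply, perspectivity_apply]
    module
  by_contra hne
  have hsub : u.1 - u'.1 ≠ 0 := sub_ne_zero.2 fun h => hne (Subtype.ext h)
  have hb1 : b 1 2 ≠ 0 := hb.linearIndependent.ne_zero 0
  obtain ⟨x, hx⟩ := mem_range_algebraMap_of_smul_mem (c := b 2 2 / b 1 2) _ (hmem 1)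
    (smul_ne_zero hb1 hsub) (by rw [smul_smul, div_mul_cancel₀ _ hb1]; exact hmem 2)
  refine (LinearIndependent.pair_iff' hb1).1 hb.linearIndependent x ?_
  rw [Algebra.smul_def, hx, div_mul_cancel₀ _ hb1]

theorem exists_pair_of_splash_subset (hb : IsTangentBasis F b) (hb' : IsTangentBasis F b')
    (h0 : b' 0 = b 0)
    (hsub : splash (linearSet K (span F (range b'))) ⊆ splash (linearSet K (span F (range b)))) :
    ∃ c ≠ 0, ∃ p ∈ span F (range b'), ∃ q ∈ span F (range b'),
      p 2 = c * b 1 2 ∧ b 2 2 • p - b 1 2 • q = meetInfty (b 1) (b 2) := by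
  rw [hb.splash_linearSet, hb'.splash_linearSet, h0] at hsub
  obtain ⟨l, hl, ⟨e, he, hw⟩, hmem⟩ :=
    exists_smul_of_normalSplash_subset (h0 ▸ hb'.linearIndependent_meetInfty) hsub
  obtain ⟨e₁, e₂, rfl⟩ := Submodule.mem_span_pair.1 he
  obtain ⟨x, y, h1⟩ := Submodule.mem_span_pair.1 (hmem (b' 1 2) (Submodule.subset_span (by simp)))
  obtain ⟨z, s, h2⟩ := Submodule.mem_span_pair.1 (hmem (b' 2 2) (Submodule.subset_span (by simp)))
  rw [← mul_right_inj' hl, mul_inv_cancel_left₀ hl] at h1 h2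
  have hdet : x * s - y * z ≠ 0 := by
    have hind := hb'.linearIndependent
    rw [← h1, ← h2, linearIndependent_pair_mul_left_iff hl,
      LinearIndependent.pair_add_smul_add_smul_iff] at hind
    exact sub_ne_zero.2 hind.2
  -- The adjugate of the matrix with rows `x, y` and `z, s` makes the third coordinates of `p` and
  -- `q` proportional to `b 1 2` and `b 2 2`; the multiples of `b' 0` cancel the translation by `e`.
  refine ⟨l * algebraMap F K (x * s - y * z), mul_ne_zero hl ?_,
    -e₂ • b' 0 + s • b' 1 + (-y) • b' 2, mem_span_range_fin_three.2 ⟨_, _, _, rfl⟩,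
    e₁ • b' 0 + (-z) • b' 1 + x • b' 2, mem_span_range_fin_three.2 ⟨_, _, _, rfl⟩, ?_, ?_⟩
  · exact (map_ne_zero_iff _ (algebraMap F K).injective).2 hdet
  · simp only [Pi.add_apply, Pi.smul_apply, h0, hb.apply_zero, ← h1, ← h2]
    simp only [Algebra.smul_def, map_sub, map_mul, map_neg]
    ring
  · refine smul_right_injective _ hl ?_
    ext i
    have hwi := congrFun hw i
    simp only [meetInfty, h0, ← h1, ← h2, Pi.add_apply, Pi.sub_apply, Pi.smul_apply,
      smul_eq_mul] at hwi ⊢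
    simp only [Algebra.smul_def, map_neg] at hwi ⊢
    linear_combination hwi

theorem exists_perspectivity_of_splash_subset (hb : IsTangentBasis F b)
    (hb' : IsTangentBasis F b') (h0 : b' 0 = b 0)
    (hsub : splash (linearSet K (span F (range b'))) ⊆ splash (linearSet K (span F (range b)))) :
    ∃ u, span F (range (b.map (perspectivity u))) = span F (range b') := by
  obtain ⟨c, hc, p, hp, q, hq, hp2, hpq⟩ := hb.exists_pair_of_splash_subset hb' h0 hsub
  have hb1 : b 1 2 ≠ 0 := hb.linearIndependent.ne_zero 0
  have hb2 : b 2 2 ≠ 0 := hb.linearIndependent.ne_zero 1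
  let d := (b 1 2)⁻¹ • (p - b 1)
  have hd1 : b 1 2 • d = p - b 1 := smul_inv_smul₀ hb1 _
  have hd2 : b 2 2 • d = q - b 2 := by
    refine (smul_right_injective _ hb1) ?_
    rw [meetInfty] at hpq
    simp only [smul_comm (b 1 2) (b 2 2) d, hd1]
    linear_combination (norm := module) hpq
  have hd : (Pi.single 2 1 + d : Fin 3 → K) 2 = c := by
    have := congrFun hd1 2
    rw [Pi.smul_apply, Pi.sub_apply, smul_eq_mul, hp2] at this
    rw [Pi.add_apply, Pi.single_eq_same]
    refine mul_left_cancel₀ hb1 ?_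
    linear_combination this
  have : Module.Finite F (span F (range b')) := Module.Finite.span_of_finite F (Set.finite_range b')
  refine ⟨⟨Pi.single 2 1 + d, hd ▸ hc⟩, Submodule.eq_of_le_of_finrank_eq ?_ ?_⟩
  · rw [Submodule.span_le, Set.range_subset_iff]
    intro i
    rw [Basis.map_apply, perspectivity_apply, add_sub_cancel_left]
    fin_cases i
    · simpa [hb.apply_zero, ← h0] using Submodule.subset_span (mem_range_self 0)
    · simpa [hd1] using hp
    · simpa [hd2] using hq
  · rw [finrank_span_range_basis, finrank_span_range_basis]

end IsTangentBasis

theorem natDegree_minpoly_ne_two_of_odd_finrank (h : Odd (finrank F K)) (r : K) :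
    (minpoly F r).natDegree ≠ 2 := by
  have : Module.Finite F K := Module.finite_of_finrank_pos h.pos
  intro hr
  have hdvd := minpoly.degree_dvd (K := F) (IsIntegral.of_finite F r)
  rw [hr] at hdvd
  exact h.not_two_dvd_nat hdvd

theorem statement10_general (hFK : ∀ r : K, (minpoly F r).natDegree ≠ 2) {S : Set (PGPoint K)}
    {T : PGPoint K} (hS : IsTangentSplash F S T) :
    Nonempty ({u : Fin 3 → K // u 2 ≠ 0} ≃ {π : Set (PGPoint K) // IsSubplane F π ∧
      (∃ T' : PGPoint K, π ∩ linf K = {T'}) ∧ splash π = S}) := by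
  obtain ⟨π₀, hπ₀, hT, rfl⟩ := hS
  obtain ⟨b, hb, hbT, rfl⟩ := exists_isTangentBasis hπ₀ hT T.submodule_eq
  refine ⟨Equiv.ofBijective (fun u => ⟨hmap (perspectivity u) '' linearSet K (span F (range b)),
    ?_⟩) ⟨fun u u' h => ?_, fun ⟨π, hπ, ⟨T', hT'⟩, hsplash⟩ => ?_⟩⟩
  · have hbu := hb.map_perspectivity u
    rw [hmap_perspectivity_image]
    exact ⟨isSubplane_iff_exists_basis.2 ⟨_, rfl⟩,
      ⟨_, hbu.linearSet_inter_linf (submodule_mk _ (Basis.ne_zero _ 0))⟩,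
      hb.splash_map_perspectivity u⟩
  · exact hb.injective_hmap_perspectivity_image (congrArg Subtype.val h)
  · obtain rfl := eq_of_splash_eq hFK hπ hπ₀ hT' hT hsplash
    obtain ⟨b', hb', hb'T, rfl⟩ := exists_isTangentBasis hπ hT' T'.submodule_eq
    obtain ⟨u, hu⟩ :=
      hb.exists_perspectivity_of_splash_subset hb' (hb'T.trans hbT.symm) hsplash.le
    exact ⟨u, Subtype.ext ((hmap_perspectivity_image u b).trans (congrArg _ hu))⟩

end Plane

theorem ncard_setOf_apply_two_ne_zero (K : Type*) [Zero K] [Finite K] :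
    {u : Fin 3 → K | u 2 ≠ 0}.ncard = Nat.card K ^ 2 * (Nat.card K - 1) := by
  classical
  have := Fintype.ofFinite K
  have hpi : {u : Fin 3 → K | u 2 ≠ 0} =
      (Fintype.piFinset (![Finset.univ, Finset.univ, {0}ᶜ] : Fin 3 → Finset K) : Set _) := by
    ext u
    simp [Fin.forall_fin_succ]
  rw [hpi, Set.ncard_coe_finset, Fintype.card_piFinset, Fin.prod_univ_three]
  simp only [Matrix.cons_val, Finset.card_univ, Finset.card_compl, Finset.card_singleton,
    Nat.card_eq_fintype_card]
  ring

/-- the number of order-`q`-subplanes tangent to `ℓ∞` with a given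
tangent splash `S` is `q⁶(q³−1)`. -/
theorem statement10 (q : ℕ) (F K : Type) [Field F] [Field K] [Fintype F] [Fintype K]
    [Algebra F K] (hF : Fintype.card F = q) (hK : Fintype.card K = q ^ 3)
    (S : Set (PGPoint K)) (T : PGPoint K) (hS : IsTangentSplash F S T) :
    {π : Set (PGPoint K) | IsSubplane F π ∧ (∃ T' : PGPoint K, π ∩ linf K = {T'}) ∧
      splash π = S}.ncard = q ^ 6 * (q ^ 3 - 1) := by
  have hq : 1 < q := hF ▸ Fintype.one_lt_card
  have hrank : Module.finrank F K = 3 :=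
    (Nat.pow_right_inj hq).1 (by rw [← hK, ← hF, Module.card_eq_pow_finrank (K := F) (V := K)])
  obtain ⟨e⟩ := statement10_general (natDegree_minpoly_ne_two_of_odd_finrank (hrank ▸ by decide)) hS
  calc _ = {u : Fin 3 → K | u 2 ≠ 0}.ncard := Nat.card_congr e.symm
    _ = q ^ 6 * (q ^ 3 - 1) := by
      rw [ncard_setOf_apply_two_ne_zero, Nat.card_eq_fintype_card, hK, ← pow_mul]

end TangentSplashPaper
end

section
/- Let q be a prime power. The number of tangent splashes of the line ℓ∞ of PG(2,q³) is q(q³+1)(q²+q+1), and for each fixed point T of ℓ∞, the number of tangent splashes of ℓ∞ with centre T is q(q²+q+1). -/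
/-!
Choose representatives `t` of a point `T` of `ℓ∞` and `s` of a second one, so that `ℓ∞` becomes
the projective line `K ∪ {∞}`, with `T = ⟨t⟩` at `∞` and `⟨x t + s⟩` at `x`. A subplane through
`T` is the image of `PG(2,F)` under a linear map `f` with `f e₀ = t`. With `B = f⁻¹ s` this gives
`f⁻¹ (x t + s) = (x + B₀, B₁, B₂)`. A point `⟨y⟩` lies on an extended line of the subplane if and
only if the coordinates of `f⁻¹ y` are linearly dependent over `F`, and it lies in the subplane if
and only if they are `F`-multiples of one element of `K`. So the subplane is tangent exactly when
`B₁, B₂` are independent over `F`, and its splash then consists of `∞` and the affine `F`-plane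
`-B₀ + ⟨B₁, B₂⟩` of `K`. Thus the tangent splashes with centre `T` correspond to the planes of
`AG(3,q)`.

If a tangent splash had two centres, placed at `∞` and `0`, there would be two-dimensional
`F`-subspaces `W, W'` of `K` with `x⁻¹ ∈ W'` for all `x ∈ W ∖ {0}`. For independent `u, v ∈ W`,
the elements `u⁻¹, v⁻¹, (u + v)⁻¹` of `W'` are linearly dependent, which makes `v / u` quadratic
over `F`; but `K` has degree 3 over `F`.
-/

namespace TangentSplashPaper

open Projectivization

section LinearAlgebra

theorem exists_linearEquiv_apply_eq {ι k V : Type*} [Finite ι] [Field k] [AddCommGroup V]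
    [Module k V] {v w : ι → V} (hv : LinearIndependent k v) (hw : LinearIndependent k w) :
    ∃ g : V ≃ₗ[k] V, ∀ i, g (v i) = w i := by
  have : FiniteDimensional k (Submodule.span k (Set.range v)) :=
    .span_of_finite k (Set.finite_range v)
  obtain ⟨g, hg⟩ := Submodule.exists_linearEquiv_restrict_eq
    (hv.linearCombinationEquiv.symm ≪≫ₗ hw.linearCombinationEquiv)
  refine ⟨g, fun i ↦ ?_⟩
  have hvi : hv.linearCombinationEquiv (Finsupp.single i 1) = v i := by simp
  have hwi : hw.linearCombinationEquiv (Finsupp.single i 1) = w i := by simp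
  rw [← hvi, ← hg, LinearEquiv.trans_apply, LinearEquiv.symm_apply_apply, hwi]

theorem exists_linearIndependent_pair_span_eq {k V : Type*} [Field k] [AddCommGroup V] [Module k V]
    {W : Submodule k V} (hW : Module.finrank k W = 2) :
    ∃ u v : V, LinearIndependent k ![u, v] ∧ Submodule.span k (Set.range ![u, v]) = W := by
  have : FiniteDimensional k W := Module.finite_of_finrank_pos (by lia)
  let b := Module.finBasisOfFinrankEq k W hW
  have hb : ![(b 0 : V), b 1] = W.subtype ∘ b := by ext i; fin_cases i <;> rfl
  refine ⟨b 0, b 1, ?_, ?_⟩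
  · rw [hb]
    exact b.linearIndependent.map' _ W.ker_subtype
  · rw [hb, Set.range_comp, Submodule.span_image, b.span_eq, Submodule.map_top,
      Submodule.range_subtype]

theorem not_linearIndependent_pair_iff {k V : Type*} [Field k] [AddCommGroup V] [Module k V]
    {u v : V} : ¬ LinearIndependent k ![u, v] ↔ ∃ (w : V) (a b : k), u = a • w ∧ v = b • w := by
  constructor
  · intro h
    by_cases hu : u = 0
    · exact ⟨v, 0, 1, by simpa using hu, (one_smul k v).symm⟩
    · rw [LinearIndependent.pair_iff' hu] at h
      push Not at h
      obtain ⟨b, hb⟩ := h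
      exact ⟨u, 1, b, (one_smul k u).symm, hb.symm⟩
  · rintro ⟨w, a, b, rfl, rfl⟩ h
    obtain ⟨-, ha⟩ := LinearIndependent.pair_iff.1 h b (-a) (by module)
    exact h.ne_zero 0 (by simp [neg_eq_zero.1 ha])

theorem linearIndependent_pair_iff_mk_ne_mk {k V : Type*} [Field k] [AddCommGroup V] [Module k V]
    {u v : V} {hu : u ≠ 0} {hv : v ≠ 0} :
    LinearIndependent k ![u, v] ↔ Projectivization.mk k u hu ≠ Projectivization.mk k v hv := by
  rw [LinearIndependent.pair_iff' hu, ne_comm, Ne, Projectivization.mk_eq_mk_iff', not_exists]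

theorem finrank_ker_dotProductEquiv {k : Type*} [Field k] {n : ℕ} {m : Fin (n + 1) → k}
    (hm : m ≠ 0) :
    Module.finrank k (dotProductEquiv k (Fin (n + 1)) m).ker = n := by
  have h := Module.Dual.finrank_ker_add_one_of_ne_zero
    ((dotProductEquiv k (Fin (n + 1))).map_ne_zero_iff.2 hm)
  rw [Module.finrank_fin_fun] at h
  exact Nat.succ_injective h

end LinearAlgebra

section ExtensionOfScalars

variable {F K : Type*} [Field F] [Field K] [Algebra F K]

theorem exists_linearEquiv_algebraMap_comp {n : Type*} [Finite n]
    (g : (n → F) ≃ₗ[F] (n → F)) :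
    ∃ G : (n → K) ≃ₗ[K] (n → K), ∀ v, G (algebraMap F K ∘ v) = algebraMap F K ∘ g v := by
  classical
  have := Fintype.ofFinite n
  have map_mul_eq_one {e e' : (n → F) →ₗ[F] (n → F)} (h : e ∘ₗ e' = .id) :
      (LinearMap.toMatrix' e).map (algebraMap F K) *
        (LinearMap.toMatrix' e').map (algebraMap F K) = 1 := by
    rw [← Matrix.map_mul, ← LinearMap.toMatrix'_comp, h, LinearMap.toMatrix'_id,
      Matrix.map_one _ (map_zero _) (map_one _)]
  refine ⟨Matrix.toLin'OfInv (map_mul_eq_one g.symm_comp) (map_mul_eq_one g.comp_symm),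
    fun v ↦ funext fun i ↦ ?_⟩
  rw [Matrix.toLin'OfInv_apply, Matrix.toLin'_apply, ← RingHom.map_mulVec,
    LinearMap.toMatrix'_mulVec]
  rfl

theorem algebraMap_comp_ne_zero {n : Type*} {v : n → F} (hv : v ≠ 0) : algebraMap F K ∘ v ≠ 0 :=
  fun h ↦ hv (funext fun i ↦ (map_eq_zero _).1 (congrFun h i))

theorem algebraMap_comp_single_one {n : Type*} [DecidableEq n] (i : n) :
    algebraMap F K ∘ Pi.single i 1 = Pi.single i 1 := by
  ext j
  rcases eq_or_ne j i with rfl | hj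
  · simp
  · simp [hj]

theorem exists_smul_eq_of_smul_algebraMap_comp_eq {n : Type*} {u v : n → F} (hu : u ≠ 0) {a : K}
    (h : a • (algebraMap F K ∘ u) = algebraMap F K ∘ v) : ∃ c : F, c • u = v := by
  obtain ⟨j, hj⟩ := Function.ne_iff.1 hu
  have hmul (i : n) : a * algebraMap F K (u i) = algebraMap F K (v i) := congrFun h i
  have ha : a = algebraMap F K (v j / u j) := by
    rw [map_div₀, ← hmul, mul_div_cancel_right₀]
    simpa using hj
  refine ⟨v j / u j, funext fun i ↦ (algebraMap F K).injective ?_⟩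
  rw [← hmul, ha, ← map_mul, Pi.smul_apply, smul_eq_mul]

theorem not_linearIndependent_add_smul_algebraMap_comp {n : Type*} [Fintype n]
    (hn : 2 < Fintype.card n) (a b : K) (u v : n → F) :
    ¬ LinearIndependent F (a • (algebraMap F K ∘ u) + b • (algebraMap F K ∘ v)) := by
  classical
  intro h
  have hle := linearIndependent_le_span' _ h {a, b} ?_
  · have hcard : Fintype.card ({a, b} : Set K) ≤ 2 := by
      simpa using Finset.card_le_two (a := a) (b := b)
    rw [Cardinal.mk_fintype, Nat.cast_le] at hle
    lia
  · rintro _ ⟨i, rfl⟩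
    refine Submodule.mem_span_pair.2 ⟨u i, v i, ?_⟩
    simp [Algebra.smul_def, mul_comm]

theorem exists_finrank_eq_two_mem_of_not_linearIndependent {y : Fin 3 → K}
    (hy : ¬ LinearIndependent F y) :
    ∃ (u v : Fin 3 → F) (W : Submodule K (Fin 3 → K)), LinearIndependent F ![u, v] ∧
      Module.finrank K W = 2 ∧ algebraMap F K ∘ u ∈ W ∧ algebraMap F K ∘ v ∈ W ∧ y ∈ W := by
  obtain ⟨m, hmy, hm⟩ := Fintype.not_linearIndependent_iff.1 hy
  have hm : m ≠ 0 := Function.ne_iff.2 hm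
  have hKm : algebraMap F K ∘ m ≠ 0 := algebraMap_comp_ne_zero hm
  have hker : Module.finrank F (dotProductEquiv F (Fin 3) m).ker = 2 :=
    finrank_ker_dotProductEquiv hm
  obtain ⟨u, v, huv, hspan⟩ := exists_linearIndependent_pair_span_eq hker
  have mem_ker {w : Fin 3 → F} (hw : w ∈ Set.range ![u, v]) :
      algebraMap F K ∘ w ∈ (dotProductEquiv K (Fin 3) (algebraMap F K ∘ m)).ker := by
    have hw : w ∈ (dotProductEquiv F (Fin 3) m).ker := hspan.le (Submodule.subset_span hw)
    rw [LinearMap.mem_ker, dotProductEquiv_apply_apply] at hw ⊢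
    rw [← RingHom.map_dotProduct, hw, map_zero]
  refine ⟨u, v, _, huv, finrank_ker_dotProductEquiv hKm, mem_ker ⟨0, rfl⟩,
    mem_ker ⟨1, rfl⟩, ?_⟩
  rw [LinearMap.mem_ker, dotProductEquiv_apply_apply, ← hmy]
  simp [dotProduct, Algebra.smul_def]

end ExtensionOfScalars

section QuadraticElements

open Polynomial

variable {F K : Type*} [Field F] [Field K] [Algebra F K]

theorem natDegree_minpoly_eq_two {α : K} {p : F[X]} (hp : p ≠ 0) (hdeg : p.natDegree ≤ 2)
    (hroot : aeval α p = 0) (hα : α ∉ (algebraMap F K).range) : (minpoly F α).natDegree = 2 := by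
  have hint : IsIntegral F α := IsAlgebraic.isIntegral ⟨p, hp, hroot⟩
  exact le_antisymm ((natDegree_le_of_dvd (minpoly.dvd F α hroot) hp).trans hdeg)
    ((minpoly.two_le_natDegree_iff hint).2 hα)

/-- A relation between `u⁻¹`, `v⁻¹` and `(u + v)⁻¹` is a quadratic equation for `v / u`. -/
theorem exists_natDegree_minpoly_eq_two_of_inv_mem {W W' : Submodule F K}
    (hW : Module.finrank F W = 2) (hW' : Module.finrank F W' = 2)
    (hinv : ∀ x ∈ W, x ≠ 0 → x⁻¹ ∈ W') : ∃ α : K, (minpoly F α).natDegree = 2 := by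
  obtain ⟨u, v, hind, hspan⟩ := exists_linearIndependent_pair_span_eq hW
  have mem_W (a b : F) : a • u + b • v ∈ W := by
    rw [← hspan, Matrix.range_cons_cons_empty]
    exact Submodule.mem_span_pair.2 ⟨a, b, rfl⟩
  have ne_zero {a b : F} (hab : a ≠ 0 ∨ b ≠ 0) : a • u + b • v ≠ 0 := fun h ↦ by
    have := LinearIndependent.pair_iff.1 hind a b h
    tauto
  have hu : u ≠ 0 := hind.ne_zero 0
  have hv : v ≠ 0 := hind.ne_zero 1
  have huv : u + v ≠ 0 := by simpa using ne_zero (a := 1) (b := 1) (by simp)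
  let w : Fin 3 → W' := ![⟨u⁻¹, hinv u (by simpa using mem_W 1 0) hu⟩,
    ⟨v⁻¹, hinv v (by simpa using mem_W 0 1) hv⟩,
    ⟨(u + v)⁻¹, hinv _ (by simpa using mem_W 1 1) huv⟩]
  have hw : ¬ LinearIndependent F w := fun h ↦ by
    have : FiniteDimensional F W' := Module.finite_of_finrank_pos (by lia)
    simpa [hW'] using h.fintype_card_le_finrank
  obtain ⟨m, hm, i, hi⟩ := Fintype.not_linearIndependent_iff.1 hw
  have hrel : m 0 • u⁻¹ + m 1 • v⁻¹ + m 2 • (u + v)⁻¹ = 0 := by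
    simpa [Fin.sum_univ_three, w] using congrArg Subtype.val hm
  refine ⟨v / u, natDegree_minpoly_eq_two
    (p := C (m 0) * X ^ 2 + C (m 0 + m 1 + m 2) * X + C (m 1)) ?_ natDegree_quadratic_le ?_ ?_⟩
  · intro hp
    have h0 : m 0 = 0 := by simpa [coeff_X, coeff_C] using congrArg (coeff · 2) hp
    have h1 : m 1 = 0 := by simpa [coeff_X, coeff_C] using congrArg (coeff · 0) hp
    have h2 : m 2 = 0 := by simpa [coeff_X, coeff_C, h0, h1] using congrArg (coeff · 1) hp
    fin_cases i <;> contradiction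
  · simp only [Algebra.smul_def] at hrel
    simp only [map_add, map_mul, map_pow, aeval_X, aeval_C]
    field_simp at hrel ⊢
    linear_combination hrel
  · rintro ⟨r, hr⟩
    refine ne_zero (a := r) (b := -1) (by simp) ?_
    rw [Algebra.smul_def, hr, div_mul_cancel₀ v hu, neg_one_smul, add_neg_cancel]

end QuadraticElements

section AffineSubspaceCount

variable {k V : Type*} [Field k] [AddCommGroup V] [Module k V]

/-- The planes of the affine space `AG(V)`, as affine subspaces of `V` with a two-dimensional
direction (which makes them nonempty). -/
abbrev AffinePlane (k V : Type*) [Field k] [AddCommGroup V] [Module k V] : Type _ :=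
  {A : AffineSubspace k V // Module.finrank k A.direction = 2}

theorem nonempty_of_finrank_direction_ne_zero {A : AffineSubspace k V}
    (hA : Module.finrank k A.direction ≠ 0) : (A : Set V).Nonempty := by
  rw [AffineSubspace.nonempty_iff_ne_bot]
  rintro rfl
  exact hA (by rw [AffineSubspace.direction_bot, finrank_bot])

/-- The `d`-dimensional affine subspaces of `V` as the cosets of its `d`-dimensional linear
subspaces. The empty subspace also has a zero-dimensional direction, hence `d ≠ 0`. -/
noncomputable def sigmaQuotientEquivAffineSubspace {d : ℕ} (hd : d ≠ 0) :
    (Σ W : {W : Submodule k V // Module.finrank k W = d}, V ⧸ W.1) ≃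
      {A : AffineSubspace k V // Module.finrank k A.direction = d} :=
  Equiv.ofBijective
    (fun c ↦ ⟨AffineSubspace.mk' c.2.out c.1.1, by rw [AffineSubspace.direction_mk', c.1.2]⟩) <| by
    constructor
    · rintro ⟨⟨W, hW⟩, c⟩ ⟨⟨W', hW'⟩, c'⟩ h
      have h : AffineSubspace.mk' c.out W = AffineSubspace.mk' c'.out W' := congrArg Subtype.val h
      obtain rfl : W = W' := by simpa using congrArg AffineSubspace.direction h
      have hmem : c.out ∈ AffineSubspace.mk' c'.out W := h ▸ AffineSubspace.self_mem_mk' _ _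
      rw [AffineSubspace.mem_mk', vsub_eq_sub, ← Submodule.Quotient.eq] at hmem
      have hc : c = c' := by simpa using hmem
      rw [hc]
    · rintro ⟨A, hA⟩
      obtain ⟨x, hx⟩ := nonempty_of_finrank_direction_ne_zero (hA.trans_ne hd)
      refine ⟨⟨⟨A.direction, hA⟩, Submodule.Quotient.mk x⟩, Subtype.ext ?_⟩
      rw [AffineSubspace.eq_iff_direction_eq_of_mem (p := x) ?_ hx]
      · exact AffineSubspace.direction_mk' _ _
      · rw [AffineSubspace.mem_mk', vsub_eq_sub, ← Submodule.Quotient.eq]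
        simp

/-- Projective duality: a hyperplane of `V` is the kernel of a linear form which is unique up to
scalars. -/
noncomputable def hyperplaneEquivProjectivizationDual {d : ℕ}
    (hV : Module.finrank k V = d + 1) :
    {W : Submodule k V // Module.finrank k W = d} ≃ Projectivization k (Module.Dual k V) :=
  have : FiniteDimensional k V := Module.finite_of_finrank_pos (by lia)
  (Subspace.orderIsoFiniteDimensional.toEquiv.trans OrderDual.ofDual |>.subtypeEquiv fun W ↦ by
    have h : Module.finrank k W + Module.finrank k W.dualAnnihilator = _ :=
      Subspace.finrank_add_finrank_dualAnnihilator_eq W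
    change _ ↔ Module.finrank k W.dualAnnihilator = 1
    lia).trans
  (Projectivization.equivSubmodule k (Module.Dual k V)).symm

theorem card_affineSubspace_of_finrank_eq_succ [Finite k] {d : ℕ} (hd : d ≠ 0)
    (hV : Module.finrank k V = d + 1) :
    Nat.card {A : AffineSubspace k V // Module.finrank k A.direction = d} =
      Nat.card k * ∑ i ∈ Finset.range (d + 1), Nat.card k ^ i := by
  have : FiniteDimensional k V := Module.finite_of_finrank_pos (by lia)
  have : Finite V := Module.finite_of_finite k
  have := Fintype.ofFinite {W : Submodule k V // Module.finrank k W = d}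
  have (W : {W : Submodule k V // Module.finrank k W = d}) : Finite (V ⧸ W.1) :=
    .of_surjective _ W.1.mkQ_surjective
  have card_quotient (W : {W : Submodule k V // Module.finrank k W = d}) :
      Nat.card (V ⧸ W.1) = Nat.card k := by
    have h := W.1.finrank_quotient_add_finrank
    rw [W.2, hV] at h
    rw [Module.natCard_eq_pow_finrank (K := k), show Module.finrank k (V ⧸ W.1) = 1 by lia, pow_one]
  rw [← Nat.card_congr (sigmaQuotientEquivAffineSubspace hd), Nat.card_sigma]
  simp only [card_quotient]
  rw [Finset.sum_const, Finset.card_univ, ← Nat.card_eq_fintype_card, smul_eq_mul, mul_comm,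
    Nat.card_congr (hyperplaneEquivProjectivizationDual hV), Projectivization.card_of_finrank k _
      ((Subspace.dual_finrank_eq (K := k)).trans hV)]

end AffineSubspaceCount

section Subplanes

variable {F K : Type*} [Field F] [Field K] [Algebra F K]

theorem mk_mem_linf_iff {x : Fin 3 → K} (hx : x ≠ 0) :
    Projectivization.mk K x hx ∈ linf K ↔ x 2 = 0 := by
  obtain ⟨a, ha⟩ := Projectivization.exists_smul_eq_mk_rep K x hx
  rw [linf, Set.mem_ofPred_eq, ← ha, Units.smul_def, Pi.smul_apply, smul_eq_mul,
    mul_eq_zero_iff_left a.ne_zero]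

theorem mk_mem_image_basePlane_iff (f : (Fin 3 → K) ≃ₗ[K] (Fin 3 → K)) {x : Fin 3 → K}
    (hx : x ≠ 0) : Projectivization.mk K x hx ∈ hmap f '' basePlane F K ↔
      ∃ (a : K) (v : Fin 3 → F), f.symm x = a • (algebraMap F K ∘ v) := by
  constructor
  · rintro ⟨-, ⟨w, hw, rfl, hrange⟩, hfw⟩
    choose v hv using hrange
    obtain rfl : algebraMap F K ∘ v = w := funext hv
    rw [hmap, Projectivization.map_mk, eq_comm, Projectivization.mk_eq_mk_iff'] at hfw
    obtain ⟨a, ha⟩ := hfw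
    exact ⟨a, v, by rw [← ha, map_smul, LinearEquiv.coe_coe, f.symm_apply_apply]⟩
  · rintro ⟨a, v, hav⟩
    have hne : a • (algebraMap F K ∘ v) ≠ 0 := hav ▸ f.symm.map_ne_zero_iff.2 hx
    have hv : algebraMap F K ∘ v ≠ 0 := right_ne_zero_of_smul hne
    refine ⟨.mk K _ hv, ⟨_, hv, rfl, fun i ↦ ⟨v i, rfl⟩⟩, ?_⟩
    rw [hmap, Projectivization.map_mk, eq_comm, Projectivization.mk_eq_mk_iff']
    exact ⟨a, by rw [LinearEquiv.coe_coe, ← map_smul, ← hav, f.apply_symm_apply]⟩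

theorem IsSubplane.exists_linearEquiv_apply_single_eq {π : Set (PGPoint K)} (hπ : IsSubplane F π)
    {t : Fin 3 → K} {ht : t ≠ 0} (htπ : Projectivization.mk K t ht ∈ π) :
    ∃ f : (Fin 3 → K) ≃ₗ[K] (Fin 3 → K), f (Pi.single 0 1) = t ∧ π = hmap f '' basePlane F K := by
  obtain ⟨f, rfl⟩ := hπ
  obtain ⟨a, v, hav⟩ := (mk_mem_image_basePlane_iff f ht).1 htπ
  have hne : a • (algebraMap F K ∘ v) ≠ 0 := hav ▸ f.symm.map_ne_zero_iff.2 ht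
  have ha : a ≠ 0 := left_ne_zero_of_smul hne
  have hv : v ≠ 0 := by
    rintro rfl
    exact hne (by ext i; simp)
  obtain ⟨g, hg⟩ := exists_linearEquiv_apply_eq
    (.of_subsingleton () (by simp) :
      LinearIndependent F fun _ : Unit ↦ (Pi.single 0 1 : Fin 3 → F))
    (.of_subsingleton () hv : LinearIndependent F fun _ : Unit ↦ v)
  obtain ⟨G, hG⟩ := exists_linearEquiv_algebraMap_comp (K := K) g
  refine ⟨G ≪≫ₗ .smulOfNeZero K _ a ha ≪≫ₗ f, ?_, ?_⟩
  · simp only [LinearEquiv.trans_apply, LinearEquiv.smulOfNeZero_apply]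
    rw [← algebraMap_comp_single_one (F := F), hG, hg (), ← hav, f.apply_symm_apply]
  · ext P
    induction P using Projectivization.ind with | _ x hx
    simp only [mk_mem_image_basePlane_iff, LinearEquiv.symm_apply_eq, LinearEquiv.trans_apply,
      LinearEquiv.smulOfNeZero_apply, map_smul, hG, smul_smul]
    constructor
    · rintro ⟨b, w, rfl⟩
      exact ⟨b * a⁻¹, g.symm w, by rw [inv_mul_cancel_right₀ ha, g.apply_symm_apply]⟩
    · rintro ⟨b, w, rfl⟩
      exact ⟨b * a, g w, rfl⟩

theorem IsLine.exists_eq_smul_add_smul {ℓ : Set (PGPoint K)} (hℓ : IsLine ℓ) {p r x : Fin 3 → K}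
    {hp : p ≠ 0} {hr : r ≠ 0} {hx : x ≠ 0}
    (hne : Projectivization.mk K p hp ≠ Projectivization.mk K r hr)
    (hpℓ : Projectivization.mk K p hp ∈ ℓ) (hrℓ : Projectivization.mk K r hr ∈ ℓ)
    (hxℓ : Projectivization.mk K x hx ∈ ℓ) : ∃ a b : K, x = a • p + b • r := by
  obtain ⟨W, hW, rfl⟩ := hℓ
  simp only [Set.mem_ofPred_eq, Projectivization.submodule_mk,
    Submodule.span_singleton_le_iff_mem] at hpℓ hrℓ hxℓ
  have hind : LinearIndependent K ![p, r] :=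
    linearIndependent_pair_iff_mk_ne_mk.2 hne
  have hspan : Submodule.span K {p, r} = W := by
    refine Submodule.eq_of_le_of_finrank_eq (Submodule.span_le.2 (Set.pair_subset hpℓ hrℓ)) ?_
    rw [← Matrix.range_cons_cons_empty p r ![], finrank_span_eq_card hind, hW, Fintype.card_fin]
  rw [← hspan] at hxℓ
  obtain ⟨a, b, h⟩ := Submodule.mem_span_pair.1 hxℓ
  exact ⟨a, b, h.symm⟩

theorem mk_mem_splash_iff (f : (Fin 3 → K) ≃ₗ[K] (Fin 3 → K)) {x : Fin 3 → K} (hx : x ≠ 0) :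
    Projectivization.mk K x hx ∈ splash (hmap f '' basePlane F K) ↔
      Projectivization.mk K x hx ∈ linf K ∧ ¬ LinearIndependent F (f.symm x) := by
  refine and_congr_right fun _ ↦ ⟨?_, fun hdep ↦ ?_⟩
  · rintro ⟨P, Q, hP, hQ, hne, ℓ, hℓ, hPℓ, hQℓ, hxℓ⟩
    induction P using Projectivization.ind with | _ p hp
    induction Q using Projectivization.ind with | _ r hr
    obtain ⟨a, b, rfl⟩ := hℓ.exists_eq_smul_add_smul hne hPℓ hQℓ hxℓ
    obtain ⟨c, u, hu⟩ := (mk_mem_image_basePlane_iff f hp).1 hP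
    obtain ⟨d, v, hv⟩ := (mk_mem_image_basePlane_iff f hr).1 hQ
    rw [map_add, map_smul, map_smul, hu, hv, smul_smul, smul_smul]
    exact not_linearIndependent_add_smul_algebraMap_comp (by simp) _ _ u v
  · obtain ⟨u, v, W, huv, hW, huW, hvW, hxW⟩ :=
      exists_finrank_eq_two_mem_of_not_linearIndependent hdep
    have hfu : f (algebraMap F K ∘ u) ≠ 0 :=
      f.map_ne_zero_iff.2 (algebraMap_comp_ne_zero (huv.ne_zero 0))
    have hfv : f (algebraMap F K ∘ v) ≠ 0 :=
      f.map_ne_zero_iff.2 (algebraMap_comp_ne_zero (huv.ne_zero 1))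
    have mem_line {z : Fin 3 → K} {hz : z ≠ 0} (hzW : f.symm z ∈ W) :
        .mk K z hz ∈ {P : PGPoint K | P.submodule ≤ W.map f.toLinearMap} := by
      rw [Set.mem_ofPred_eq, Projectivization.submodule_mk, Submodule.span_singleton_le_iff_mem]
      exact (Submodule.mem_map_equiv W).2 hzW
    refine ⟨.mk K _ hfu, .mk K _ hfv, (mk_mem_image_basePlane_iff f hfu).2 ⟨1, u, by simp⟩,
      (mk_mem_image_basePlane_iff f hfv).2 ⟨1, v, by simp⟩, fun h ↦ ?_, _,
      ⟨_, (LinearEquiv.finrank_map_eq f W).trans hW, rfl⟩, mem_line (by simpa using huW),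
      mem_line (by simpa using hvW), mem_line hxW⟩
    obtain ⟨a, ha⟩ := (Projectivization.mk_eq_mk_iff' ..).1 h
    rw [← map_smul, f.injective.eq_iff] at ha
    obtain ⟨c, hc⟩ := exists_smul_eq_of_smul_algebraMap_comp_eq (huv.ne_zero 1) ha
    exact not_linearIndependent_pair_iff.2 ⟨v, c, 1, hc.symm, (one_smul F v).symm⟩ huv

end Subplanes

section Coordinates

variable {K : Type*} [Field K]

/-- A coordinate system on `ℓ∞`: a basis `t, s` of the vector plane representing `ℓ∞`. -/
structure LinfFrame (K : Type*) [Field K] where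
  t : Fin 3 → K
  s : Fin 3 → K
  t_two : t 2 = 0
  s_two : s 2 = 0
  linearIndependent : LinearIndependent K ![t, s]

namespace LinfFrame

variable (φ : LinfFrame K)

theorem smul_add_smul_eq_zero_iff {a b : K} : a • φ.t + b • φ.s = 0 ↔ a = 0 ∧ b = 0 :=
  ⟨LinearIndependent.pair_iff.1 φ.linearIndependent a b, by rintro ⟨rfl, rfl⟩; simp⟩

theorem t_ne_zero : φ.t ≠ 0 := φ.linearIndependent.ne_zero 0

theorem smul_t_add_s_ne_zero (x : K) : x • φ.t + φ.s ≠ 0 := fun h ↦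
  one_ne_zero (φ.smul_add_smul_eq_zero_iff.1 (by rwa [one_smul] : x • φ.t + (1 : K) • φ.s = 0)).2

/-- The point of `ℓ∞` with coordinate `∞`. -/
def infty : PGPoint K := .mk K φ.t φ.t_ne_zero

/-- The point of `ℓ∞` with affine coordinate `x`. -/
def point (x : K) : PGPoint K := .mk K (x • φ.t + φ.s) (φ.smul_t_add_s_ne_zero x)

theorem infty_mem_linf : φ.infty ∈ linf K := (mk_mem_linf_iff _).2 φ.t_two

theorem point_mem_linf (x : K) : φ.point x ∈ linf K :=
  (mk_mem_linf_iff _).2 (by simp [φ.t_two, φ.s_two])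

theorem point_ne_infty (x : K) : φ.point x ≠ φ.infty := by
  intro h
  obtain ⟨a, ha⟩ := (Projectivization.mk_eq_mk_iff' ..).1 h
  have := φ.smul_add_smul_eq_zero_iff.1 (by rw [sub_smul, ha]; module :
    (x - a) • φ.t + (1 : K) • φ.s = 0)
  exact one_ne_zero this.2

theorem point_injective : Function.Injective φ.point := by
  intro x y h
  obtain ⟨a, ha⟩ := (Projectivization.mk_eq_mk_iff' ..).1 h
  obtain ⟨hay, ha1⟩ := φ.smul_add_smul_eq_zero_iff.1 (by
    rw [← sub_eq_zero.2 ha]; module : (a * y - x) • φ.t + (a - 1) • φ.s = 0)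
  rw [sub_eq_zero.1 ha1, one_mul] at hay
  exact (sub_eq_zero.1 hay).symm

theorem exists_eq_smul_add_smul {x : Fin 3 → K} (hx : x 2 = 0) :
    ∃ a b : K, x = a • φ.t + b • φ.s := by
  have hproj : (LinearMap.proj 2 : Module.Dual K (Fin 3 → K)) ≠ 0 := fun h ↦
    one_ne_zero (LinearMap.congr_fun h 1)
  have hker := Module.Dual.finrank_ker_add_one_of_ne_zero hproj
  have hspan : Submodule.span K {φ.t, φ.s} = LinearMap.ker (LinearMap.proj 2) := by
    refine Submodule.eq_of_le_of_finrank_eq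
      (Submodule.span_le.2 (Set.pair_subset φ.t_two φ.s_two)) ?_
    rw [← Matrix.range_cons_cons_empty φ.t φ.s ![], finrank_span_eq_card φ.linearIndependent]
    rw [Module.finrank_fin_fun] at hker
    exact Nat.succ_injective hker.symm
  obtain ⟨a, b, h⟩ := Submodule.mem_span_pair.1 (hspan.ge hx)
  exact ⟨a, b, h.symm⟩

theorem eq_infty_or_exists_eq_point {X : PGPoint K} (hX : X ∈ linf K) :
    X = φ.infty ∨ ∃ x, X = φ.point x := by
  induction X using Projectivization.ind with | _ x hx
  obtain ⟨a, b, rfl⟩ := φ.exists_eq_smul_add_smul ((mk_mem_linf_iff hx).1 hX)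
  rcases eq_or_ne b 0 with rfl | hb
  · exact .inl ((Projectivization.mk_eq_mk_iff' ..).2 ⟨a, by simp⟩)
  · exact .inr ⟨a / b, (Projectivization.mk_eq_mk_iff' ..).2
      ⟨b, by rw [smul_add, smul_smul, mul_div_cancel₀ a hb]⟩⟩

/-- The coordinate change `x ↦ x⁻¹`. -/
def swap : LinfFrame K where
  t := φ.s
  s := φ.t
  t_two := φ.s_two
  s_two := φ.t_two
  linearIndependent := LinearIndependent.pair_symm_iff.1 φ.linearIndependent

theorem swap_infty : φ.swap.infty = φ.point 0 := by
  simp [infty, point, swap]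

theorem swap_point_zero : φ.swap.point 0 = φ.infty := φ.swap.swap_infty.symm

theorem swap_point_inv {x : K} (hx : x ≠ 0) : φ.swap.point x⁻¹ = φ.point x :=
  (Projectivization.mk_eq_mk_iff' ..).2 ⟨x⁻¹, by
    rw [smul_add, smul_smul, inv_mul_cancel₀ hx, one_smul, add_comm]; rfl⟩

theorem exists_infty_eq_and_point_zero_eq {T T' : PGPoint K} (hT : T ∈ linf K) (hT' : T' ∈ linf K)
    (hne : T ≠ T') : ∃ φ : LinfFrame K, φ.infty = T ∧ φ.point 0 = T' :=
  ⟨⟨T.rep, T'.rep, hT, hT', Projectivization.linearIndependent_pair_iff_ne.2 hne⟩, T.mk_rep, by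
    simp [point]⟩

instance : Nonempty (LinfFrame K) := by
  refine ⟨⟨Pi.single 0 1, Pi.single 1 1, by simp, by simp, LinearIndependent.pair_iff.2 ?_⟩⟩
  intro a b h
  exact ⟨by simpa using congrFun h 0, by simpa using congrFun h 1⟩

theorem exists_infty_eq {T : PGPoint K} (hT : T ∈ linf K) : ∃ φ : LinfFrame K, φ.infty = T := by
  obtain ⟨φ⟩ : Nonempty (LinfFrame K) := inferInstance
  obtain rfl | ⟨x, rfl⟩ := φ.eq_infty_or_exists_eq_point hT
  · exact ⟨φ, rfl⟩
  · obtain ⟨ψ, hψ, -⟩ :=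
      exists_infty_eq_and_point_zero_eq hT φ.infty_mem_linf (φ.point_ne_infty x)
    exact ⟨ψ, hψ⟩

/-- The subset of `ℓ∞` consisting of the point at infinity of `φ` and of the points with coordinate
in `A`. -/
def projClosure (A : Set K) : Set (PGPoint K) := insert φ.infty (φ.point '' A)

theorem infty_mem_projClosure (A : Set K) : φ.infty ∈ φ.projClosure A := Set.mem_insert _ _

theorem projClosure_subset_linf (A : Set K) : φ.projClosure A ⊆ linf K :=
  Set.insert_subset φ.infty_mem_linf (Set.image_subset_iff.2 fun x _ ↦ φ.point_mem_linf x)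

theorem point_mem_projClosure_iff {A : Set K} {x : K} : φ.point x ∈ φ.projClosure A ↔ x ∈ A := by
  rw [projClosure, Set.mem_insert_iff, or_iff_right (φ.point_ne_infty x),
    φ.point_injective.mem_set_image]

theorem projClosure_injective : Function.Injective φ.projClosure := fun A B h ↦ by
  ext x
  rw [← φ.point_mem_projClosure_iff, h, φ.point_mem_projClosure_iff]

theorem eq_projClosure_iff {S : Set (PGPoint K)} {A : Set K} (hS : S ⊆ linf K) :
    S = φ.projClosure A ↔ φ.infty ∈ S ∧ ∀ x, φ.point x ∈ S ↔ x ∈ A := by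
  constructor
  · rintro rfl
    exact ⟨φ.infty_mem_projClosure A, fun x ↦ φ.point_mem_projClosure_iff⟩
  · rintro ⟨hinfty, hpoint⟩
    ext X
    by_cases hX : X ∈ linf K
    · obtain rfl | ⟨x, rfl⟩ := φ.eq_infty_or_exists_eq_point hX
      · exact iff_of_true hinfty (φ.infty_mem_projClosure A)
      · rw [hpoint, point_mem_projClosure_iff]
    · exact iff_of_false (fun h ↦ hX (hS h)) (fun h ↦ hX (φ.projClosure_subset_linf A h))

end LinfFrame

theorem ncard_linf [Finite K] : (linf K).ncard = Nat.card K + 1 := by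
  obtain ⟨φ⟩ : Nonempty (LinfFrame K) := inferInstance
  have hlinf : linf K = insert φ.infty (φ.point '' Set.univ) :=
    (φ.eq_projClosure_iff subset_rfl).2
      ⟨φ.infty_mem_linf, fun x ↦ iff_of_true (φ.point_mem_linf x) (Set.mem_univ x)⟩
  have hinfty : φ.infty ∉ φ.point '' Set.univ := by
    rintro ⟨x, -, hx⟩
    exact φ.point_ne_infty x hx
  rw [hlinf, Set.ncard_insert_of_notMem hinfty (Set.toFinite _),
    Set.ncard_image_of_injective _ φ.point_injective, Set.ncard_univ]

end Coordinates

section TangentSplashes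

variable {F K : Type*} [Field F] [Field K] [Algebra F K]

namespace LinfFrame

variable (φ : LinfFrame K)

theorem symm_apply_smul_t_add_s {f : (Fin 3 → K) ≃ₗ[K] (Fin 3 → K)}
    (hf : f (Pi.single 0 1) = φ.t) (x : K) :
    f.symm (x • φ.t + φ.s) = ![x + f.symm φ.s 0, f.symm φ.s 1, f.symm φ.s 2] := by
  rw [← hf, map_add, map_smul, f.symm_apply_apply]
  ext i
  fin_cases i <;> simp

theorem infty_mem_image_basePlane {f : (Fin 3 → K) ≃ₗ[K] (Fin 3 → K)}
    (hf : f (Pi.single 0 1) = φ.t) : φ.infty ∈ hmap f '' basePlane F K := by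
  refine (mk_mem_image_basePlane_iff f _).2 ⟨1, Pi.single 0 1, f.symm_apply_eq.2 ?_⟩
  rw [algebraMap_comp_single_one, one_smul, hf]

theorem image_basePlane_inter_linf_eq_iff {f : (Fin 3 → K) ≃ₗ[K] (Fin 3 → K)}
    (hf : f (Pi.single 0 1) = φ.t) :
    hmap f '' basePlane F K ∩ linf K = {φ.infty} ↔
      LinearIndependent F ![f.symm φ.s 1, f.symm φ.s 2] := by
  have point_mem_iff (x : K) : φ.point x ∈ hmap f '' basePlane F K ↔ ∃ (c : K) (v : Fin 3 → F),
      ![x + f.symm φ.s 0, f.symm φ.s 1, f.symm φ.s 2] = c • (algebraMap F K ∘ v) := by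
    rw [← φ.symm_apply_smul_t_add_s hf]
    exact mk_mem_image_basePlane_iff f _
  constructor
  · intro htangent
    by_contra hdep
    obtain ⟨c, a, b, ha, hb⟩ := not_linearIndependent_pair_iff.1 hdep
    have hmem : φ.point (-f.symm φ.s 0) ∈ hmap f '' basePlane F K := by
      refine (point_mem_iff _).2 ⟨c, ![0, a, b], ?_⟩
      ext i
      fin_cases i <;> simp [ha, hb, Algebra.smul_def, mul_comm]
    exact φ.point_ne_infty _ (htangent.le ⟨hmem, φ.point_mem_linf _⟩)
  · refine fun hind ↦ Set.Subset.antisymm (fun X hX ↦ ?_)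
      (Set.singleton_subset_iff.2 ⟨φ.infty_mem_image_basePlane hf, φ.infty_mem_linf⟩)
    obtain rfl | ⟨x, rfl⟩ := φ.eq_infty_or_exists_eq_point hX.2
    · rfl
    · obtain ⟨c, v, h⟩ := (point_mem_iff x).1 hX.1
      refine absurd hind (not_linearIndependent_pair_iff.2 ⟨c, v 1, v 2, ?_, ?_⟩)
      · simpa [Algebra.smul_def, mul_comm] using congrFun h 1
      · simpa [Algebra.smul_def, mul_comm] using congrFun h 2

theorem splash_image_basePlane_eq {f : (Fin 3 → K) ≃ₗ[K] (Fin 3 → K)}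
    (hf : f (Pi.single 0 1) = φ.t)
    (hind : LinearIndependent F ![f.symm φ.s 1, f.symm φ.s 2]) :
    splash (hmap f '' basePlane F K) = φ.projClosure (AffineSubspace.mk' (-f.symm φ.s 0)
      (Submodule.span F (Set.range ![f.symm φ.s 1, f.symm φ.s 2]))) := by
  refine (φ.eq_projClosure_iff fun X hX ↦ hX.1).2 ⟨?_, fun x ↦ ?_⟩
  · refine (mk_mem_splash_iff f _).2 ⟨φ.infty_mem_linf, fun h ↦ h.ne_zero 1 ?_⟩
    rw [← hf, f.symm_apply_apply, Pi.single_eq_of_ne one_ne_zero]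
  · refine (mk_mem_splash_iff f _).trans ?_
    refine (and_iff_right (φ.point_mem_linf x)).trans ?_
    rw [φ.symm_apply_smul_t_add_s hf, SetLike.mem_coe, AffineSubspace.mem_mk', vsub_eq_sub,
      sub_neg_eq_add]
    exact (not_congr linearIndependent_finCons).trans (by simp only [hind, true_and, not_not])

theorem exists_linearEquiv_symm_apply_s_eq {B : Fin 3 → K} (hB : B 1 ≠ 0) :
    ∃ f : (Fin 3 → K) ≃ₗ[K] (Fin 3 → K), f (Pi.single 0 1) = φ.t ∧ f.symm φ.s = B := by
  have hsource : LinearIndependent K ![Pi.single 0 1, B] := by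
    refine LinearIndependent.pair_iff.2 fun a b h ↦ ?_
    have hb : b = 0 := by simpa [hB] using congrFun h 1
    exact ⟨by simpa [hb] using congrFun h 0, hb⟩
  obtain ⟨f, hf⟩ := exists_linearEquiv_apply_eq hsource φ.linearIndependent
  exact ⟨f, hf 0, f.symm_apply_eq.2 (hf 1).symm⟩

theorem isTangentSplash_infty_iff {S : Set (PGPoint K)} :
    IsTangentSplash F S φ.infty ↔ ∃ A : AffinePlane F K, S = φ.projClosure A.1 := by
  constructor
  · rintro ⟨π, hπ, htangent, rfl⟩
    have hinfty : φ.infty ∈ π := (htangent.ge rfl).1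
    obtain ⟨f, hf, rfl⟩ := hπ.exists_linearEquiv_apply_single_eq hinfty
    have hind := (φ.image_basePlane_inter_linf_eq_iff hf).1 htangent
    refine ⟨⟨.mk' (-f.symm φ.s 0) (.span F (Set.range ![f.symm φ.s 1, f.symm φ.s 2])), ?_⟩,
      φ.splash_image_basePlane_eq hf hind⟩
    rw [AffineSubspace.direction_mk', finrank_span_eq_card hind, Fintype.card_fin]
  · rintro ⟨⟨A, hA⟩, rfl⟩
    obtain ⟨x, hx⟩ := nonempty_of_finrank_direction_ne_zero (hA.trans_ne two_ne_zero)
    obtain ⟨u, v, hind, hspan⟩ := exists_linearIndependent_pair_span_eq hA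
    obtain ⟨f, hft, hfs⟩ :=
      φ.exists_linearEquiv_symm_apply_s_eq (B := ![-x, u, v]) (hind.ne_zero 0)
    have hBind : LinearIndependent F ![f.symm φ.s 1, f.symm φ.s 2] := by
      rw [hfs]
      exact hind
    have hA_eq : AffineSubspace.mk' (-f.symm φ.s 0)
        (Submodule.span F (Set.range ![f.symm φ.s 1, f.symm φ.s 2])) = A := by
      rw [hfs]
      refine Eq.trans ?_ (AffineSubspace.mk'_eq hx)
      rw [← hspan, Matrix.cons_val_zero, neg_neg]
      rfl
    refine ⟨_, ⟨f, rfl⟩, (φ.image_basePlane_inter_linf_eq_iff hft).2 hBind, ?_⟩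
    rw [φ.splash_image_basePlane_eq hft hBind, hA_eq]

end LinfFrame

theorem IsTangentSplash.center_mem_linf {S : Set (PGPoint K)} {T : PGPoint K}
    (h : IsTangentSplash F S T) : T ∈ linf K := by
  obtain ⟨π, -, hπ, -⟩ := h
  exact (hπ.ge rfl).2

theorem IsTangentSplash.center_unique (hK : ∀ α : K, (minpoly F α).natDegree ≠ 2)
    {S : Set (PGPoint K)} {T T' : PGPoint K} (h : IsTangentSplash F S T)
    (h' : IsTangentSplash F S T') : T = T' := by
  by_contra hne
  obtain ⟨φ, rfl, rfl⟩ :=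
    LinfFrame.exists_infty_eq_and_point_zero_eq h.center_mem_linf h'.center_mem_linf hne
  obtain ⟨⟨A, hA⟩, hS⟩ := φ.isTangentSplash_infty_iff.1 h
  rw [← φ.swap_infty] at h'
  obtain ⟨⟨A', hA'⟩, hS'⟩ := φ.swap.isTangentSplash_infty_iff.1 h'
  have mem_A {x : K} : φ.point x ∈ S ↔ x ∈ A := hS ▸ φ.point_mem_projClosure_iff
  have mem_A' {x : K} : φ.swap.point x ∈ S ↔ x ∈ A' := hS' ▸ φ.swap.point_mem_projClosure_iff
  have zero_mem : (0 : K) ∈ A :=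
    mem_A.1 (φ.swap_infty ▸ hS'.ge (φ.swap.infty_mem_projClosure A'))
  have zero_mem' : (0 : K) ∈ A' :=
    mem_A'.1 (φ.swap_point_zero ▸ hS.ge (φ.infty_mem_projClosure A))
  have mem_direction_iff {C : AffineSubspace F K} (hC : (0 : K) ∈ C) {x : K} :
      x ∈ C.direction ↔ x ∈ C := by
    rw [← AffineSubspace.vadd_mem_iff_mem_direction x hC, vadd_eq_add, add_zero]
  obtain ⟨α, hα⟩ := exists_natDegree_minpoly_eq_two_of_inv_mem hA hA' fun x hx hx0 ↦ by
    rw [mem_direction_iff zero_mem, ← mem_A, ← φ.swap_point_inv hx0, mem_A'] at hx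
    exact (mem_direction_iff zero_mem').2 hx
  exact hK α hα

theorem nonempty_equiv_affinePlane {T : PGPoint K} (hT : T ∈ linf K) :
    Nonempty ({S : Set (PGPoint K) | IsTangentSplash F S T} ≃ AffinePlane F K) := by
  obtain ⟨φ, rfl⟩ := LinfFrame.exists_infty_eq hT
  let splashOfPlane (A : AffinePlane F K) : {S : Set (PGPoint K) | IsTangentSplash F S φ.infty} :=
    ⟨φ.projClosure A.1, φ.isTangentSplash_infty_iff.2 ⟨A, rfl⟩⟩
  refine ⟨(Equiv.ofBijective splashOfPlane ⟨fun A B h ↦ ?_, fun ⟨S, hS⟩ ↦ ?_⟩).symm⟩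
  · exact Subtype.ext (SetLike.coe_injective (φ.projClosure_injective (congrArg Subtype.val h)))
  · obtain ⟨A, rfl⟩ := φ.isTangentSplash_infty_iff.1 hS
    exact ⟨A, rfl⟩

theorem statement11_general
    (hK : ∀ α : K, (minpoly F α).natDegree ≠ 2) :
    Nonempty ({S : Set (PGPoint K) | ∃ T, IsTangentSplash F S T} ≃ linf K × AffinePlane F K) ∧
      ∀ T ∈ linf K,
        Nonempty ({S : Set (PGPoint K) | IsTangentSplash F S T} ≃ AffinePlane F K) := by
  refine ⟨?_, fun T ↦ nonempty_equiv_affinePlane⟩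
  have e (T : linf K) := Classical.choice (nonempty_equiv_affinePlane (F := F) T.2)
  let forgetCenter (S : Σ T : linf K, {S : Set (PGPoint K) | IsTangentSplash F S T}) :
      {S : Set (PGPoint K) | ∃ T, IsTangentSplash F S T} := ⟨S.2, S.1, S.2.2⟩
  have hbij : Function.Bijective forgetCenter := by
    refine ⟨fun ⟨T, S, hS⟩ ⟨T', S', hS'⟩ h ↦ ?_,
      fun ⟨S, T, hS⟩ ↦ ⟨⟨⟨T, hS.center_mem_linf⟩, S, hS⟩, rfl⟩⟩
    obtain rfl : S = S' := congrArg Subtype.val h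
    obtain rfl : T = T' := Subtype.ext (hS.center_unique hK hS')
    rfl
  exact ⟨(Equiv.ofBijective forgetCenter hbij).symm.trans <|
    (Equiv.sigmaCongrRight e).trans (Equiv.sigmaEquivProd _ _)⟩

end TangentSplashes

/-- the number of tangent splashes of `ℓ∞` is `q(q³+1)(q²+q+1)`, and
for each point `T` of `ℓ∞` the number of tangent splashes with centre `T` is
`q(q²+q+1)`. -/
theorem statement11 (q : ℕ) (F K : Type) [Field F] [Field K] [Fintype F] [Fintype K]
    [Algebra F K] (hF : Fintype.card F = q) (hK : Fintype.card K = q ^ 3) :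
    {S : Set (PGPoint K) | ∃ T : PGPoint K, IsTangentSplash F S T}.ncard =
      q * (q ^ 3 + 1) * (q ^ 2 + q + 1) ∧
    ∀ T : PGPoint K, T ∈ linf K →
      {S : Set (PGPoint K) | IsTangentSplash F S T}.ncard = q * (q ^ 2 + q + 1) := by
  have hd : Module.finrank F K = 3 := by
    have h := Module.card_eq_pow_finrank (K := F) (V := K)
    rw [hF, hK] at h
    exact (Nat.pow_right_injective (hF ▸ Fintype.one_lt_card) h).symm
  have hminpoly (α : K) : (minpoly F α).natDegree ≠ 2 := by
    intro hα
    have h := minpoly.degree_dvd (Algebra.IsIntegral.isIntegral (R := F) α)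
    rw [hα, hd] at h
    contradiction
  have hplanes : Nat.card (AffinePlane F K) = q * (q ^ 2 + q + 1) := by
    rw [card_affineSubspace_of_finrank_eq_succ two_ne_zero hd, Nat.card_eq_fintype_card, hF,
      Finset.sum_range_succ, Finset.sum_range_succ, Finset.sum_range_one]
    ring
  obtain ⟨⟨e⟩, h⟩ := statement11_general hminpoly
  constructor
  · rw [← Nat.card_coe_set_eq, Nat.card_congr e, Nat.card_prod, Nat.card_coe_set_eq, ncard_linf,
      Nat.card_eq_fintype_card, hK, hplanes]
    ring
  · intro T hT
    obtain ⟨e⟩ := h T hT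
    rw [← Nat.card_coe_set_eq, Nat.card_congr e, hplanes]

end TangentSplashPaper
end
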